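/- arXiv:1911.11969 — 2 statements merged into one kernel-verified Lean document; each statement's English description precedes it below -/
import Mathlib

section
/- Let β : ℕ → ℝ be a decreasing function with β(n) → 0 and β(n) ≤ 1/(8 log log n) for all sufficiently large n, and let (b_n)_{n≥1} be a strictly increasing sequence of positive integers with n ≤ b_n ≤ n^{1+β(n)} for all n. Then there exists C' > 0 such that for every ε > 0 there is N₀ with: for every N ≥ N₀ and every interval I ⊆ ℝ of length |I| > exp(−C' (log N)²), one has | 2^{−N} · #{ (s_1,…,s_N) ∈ {−1,1}^N : Σ_{n=1}^N s_n/b_n ∈ I } − ∫_I g(x) dx | ≤ ε·|I|, where g(x) = 2∫_0^∞ cos(2πux) ∏_{n=1}^∞ cos(2πu/b_n) du. -/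
open Filter Real MeasureTheory

/-!
The characteristic function of `X_N = ∑_{n ≤ N} s n / b n` is the partial product
`ϱ_N(x) = ∏_{n ≤ N} cos (π x / b n)` in a suitable normalization, and `g` is the Fourier transform
of `u ↦ ϱ (2u)`. The theorem holds with `C' = 1`.

The heart of the matter is the pointwise bound `|ϱ_N(x)| ≤ 1 / x²` for
`N² ≤ x ≤ exp (3 log² N)` (`prod_abs_cos_le`). A factor is at most `exp (-2 δ²)` unless `x / b n` is
within `δ = N ^ (-1 / 4)` of an integer, in which case `b n` divides an integer within `δ b_N` of
`x`. Write `ω` for the number of distinct prime factors. Few integers up to `b_N ≤ N ^ (1 + o(1))`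
have large `ω`, because `∑_{d ≤ Y} m ^ ω(d) / d ≤ (1 + log Y) ^ m`; and an integer `k` has at most
`(1 + log₂ k) ^ (2 r)` divisors with `ω ≤ r`. Choosing `m ≈ √(log N)` and `m ^ r ≈ N ^ (1 / 50)`
shows that at most `N / 2` of the factors are exceptional (`card_bad_le`), so
`|ϱ_N(x)| ≤ exp (-√N)`, which is smaller than `1 / x²`.

As `|ϱ_N|` is decreasing in `N`, this yields `|ϱ_N(x)| ≤ K / (1 + x²)` for all
`|x| ≤ exp (3 log² N)` (`abs_prod_cos_le`). Dominated convergence then shows that `ϱ_N` tends to `ϱ`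
in `L¹` on this window. For a Schwartz function `ψ`, Fourier inversion turns the difference between
the mean of `ψ ((X_N - a) / L)` and the corresponding integral against `g` into an integral of
`L * 𝓕 ψ (L u)` against `ϱ_N(2u) - ϱ(2u)`. The part inside the window is `o(L)`, and the part
outside is negligible by the decay of `𝓕 ψ`, as long as `L > exp (-log² N)`
(`schwartz_test_bound`). Finally the indicator of `[a, a + L]` is sandwiched between two smooth
bumps.
-/

/-! ### Divisor sums weighted by the number of prime factors -/

/-- Expanding the left side over subsets of the prime factors of `n` gives the sum over the
squarefree divisors only. -/
lemma succ_pow_card_primeFactors_le (m n : ℕ) (hn : n ≠ 0) :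
    (m + 1) ^ n.primeFactors.card ≤ ∑ d ∈ n.divisors, m ^ d.primeFactors.card := by
  have h1 : (m + 1) ^ n.primeFactors.card = ∑ S ∈ n.primeFactors.powerset, m ^ S.card := by
    have := Finset.sum_pow_mul_eq_add_pow m 1 n.primeFactors
    simpa using this.symm
  have hS : ∀ S ∈ n.primeFactors.powerset, (∏ p ∈ S, p).primeFactors = S := fun S hS =>
    Nat.primeFactors_prod fun p hp => Nat.prime_of_mem_primeFactors (Finset.mem_powerset.1 hS hp)
  rw [h1]
  calc ∑ S ∈ n.primeFactors.powerset, m ^ S.card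
      = ∑ S ∈ n.primeFactors.powerset, m ^ (∏ p ∈ S, p).primeFactors.card :=
        Finset.sum_congr rfl fun S h => by rw [hS S h]
    _ = ∑ d ∈ n.primeFactors.powerset.image (fun S => ∏ p ∈ S, p), m ^ d.primeFactors.card := by
        rw [Finset.sum_image]
        intro S h S' h' e
        rw [← hS S h, ← hS S' h']
        exact congrArg Nat.primeFactors e
    _ ≤ _ := by
        apply Finset.sum_le_sum_of_subset
        intro d hd
        obtain ⟨S, h, rfl⟩ := Finset.mem_image.1 hd
        exact Nat.mem_divisors.2 ⟨(Finset.prod_dvd_prod_of_subset _ _ _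
          (Finset.mem_powerset.1 h)).trans (Nat.prod_primeFactors_dvd n), hn⟩

/-- The proof is by induction on `m`: since `(m + 1) ^ ω(n) ≤ ∑_{d ∣ n} m ^ ω(d)`, where `ω` counts
distinct primes, each step costs one harmonic sum. -/
lemma sum_pow_card_primeFactors_div_le (Y m : ℕ) :
    ∑ d ∈ Finset.Icc 1 Y, (m : ℝ) ^ d.primeFactors.card / d ≤ (1 + Real.log Y) ^ m := by
  have hharm : ∑ d ∈ Finset.Icc 1 Y, (1 : ℝ) / d ≤ 1 + Real.log Y := by
    have := harmonic_le_one_add_log Y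
    rw [harmonic_eq_sum_Icc] at this
    push_cast at this
    simpa using this
  have hH : 0 ≤ 1 + Real.log Y := le_trans (Finset.sum_nonneg fun _ _ => by positivity) hharm
  induction m with
  | zero =>
    rw [pow_zero]
    calc ∑ d ∈ Finset.Icc 1 Y, ((0 : ℕ) : ℝ) ^ d.primeFactors.card / d
        ≤ ∑ d ∈ Finset.Icc 1 Y, if d = 1 then (1 : ℝ) else 0 := by
          apply Finset.sum_le_sum
          intro d hd
          have : 1 ≤ d := (Finset.mem_Icc.1 hd).1
          split_ifs with h
          · simp [h]
          · have : d.primeFactors.card ≠ 0 := by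
              rw [Finset.card_ne_zero, Nat.nonempty_primeFactors]; omega
            simp [this]
      _ ≤ 1 := by
          rw [Finset.sum_ite_eq' ]
          split_ifs <;> norm_num
  | succ m ih =>
    calc ∑ n ∈ Finset.Icc 1 Y, ((m + 1 : ℕ) : ℝ) ^ n.primeFactors.card / n
        ≤ ∑ n ∈ Finset.Icc 1 Y, ∑ x ∈ n.divisorsAntidiagonal,
            ((m : ℝ) ^ x.1.primeFactors.card / x.1) * (1 / x.2) := by
          apply Finset.sum_le_sum
          intro n hn
          have hn0 : n ≠ 0 := by have := (Finset.mem_Icc.1 hn).1; omega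
          have h1 : ((m + 1 : ℕ) : ℝ) ^ n.primeFactors.card ≤
              ∑ d ∈ n.divisors, (m : ℝ) ^ d.primeFactors.card := by
            exact_mod_cast succ_pow_card_primeFactors_le m n hn0
          rw [Nat.sum_divisorsAntidiagonal
            (fun i j => ((m : ℝ) ^ i.primeFactors.card / i) * (1 / (j : ℝ)))]
          calc _ ≤ (∑ d ∈ n.divisors, (m : ℝ) ^ d.primeFactors.card) / n := by gcongr
            _ = _ := by
              rw [Finset.sum_div]
              apply Finset.sum_congr rfl
              intro d hd
              have hdn := Nat.dvd_of_mem_divisors hd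
              have hd0 : (d : ℝ) ≠ 0 := by
                exact_mod_cast (Nat.pos_of_mem_divisors hd).ne'
              have hn0' : (n : ℝ) ≠ 0 := by exact_mod_cast hn0
              rw [Nat.cast_div hdn hd0]
              field_simp
      _ = ∑ x ∈ (Finset.Icc 1 Y).biUnion (fun n => n.divisorsAntidiagonal),
            ((m : ℝ) ^ x.1.primeFactors.card / x.1) * (1 / x.2) := by
          rw [Finset.sum_biUnion]
          intro i _ j _ hij
          rw [Function.onFun, Finset.disjoint_left]
          intro x hx hx'
          rw [Nat.mem_divisorsAntidiagonal] at hx hx'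
          exact hij (hx.1.symm.trans hx'.1)
      _ ≤ ∑ x ∈ Finset.Icc 1 Y ×ˢ Finset.Icc 1 Y,
            ((m : ℝ) ^ x.1.primeFactors.card / x.1) * (1 / x.2) := by
          apply Finset.sum_le_sum_of_subset_of_nonneg
          · intro x hx
            obtain ⟨n, hn, hx⟩ := Finset.mem_biUnion.1 hx
            rw [Nat.mem_divisorsAntidiagonal] at hx
            have hn := Finset.mem_Icc.1 hn
            have h1 : x.1 ≠ 0 := by rintro h; simp [h] at hx; omega
            have h2 : x.2 ≠ 0 := by rintro h; simp [h] at hx; omega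
            have h3 := Nat.le_of_dvd (by omega) (Dvd.intro _ hx.1)
            have h4 := Nat.le_of_dvd (by omega) (Dvd.intro_left _ hx.1)
            simp only [Finset.mem_product, Finset.mem_Icc]
            omega
          · intro x _ _
            positivity
      _ = (∑ d ∈ Finset.Icc 1 Y, (m : ℝ) ^ d.primeFactors.card / d) *
            ∑ d ∈ Finset.Icc 1 Y, (1 : ℝ) / d := by
          rw [Finset.sum_product, Finset.sum_mul_sum]
      _ ≤ (1 + Real.log Y) ^ m * (1 + Real.log Y) := by
          gcongr
      _ = _ := by rw [pow_succ]

lemma card_primeFactors_le_log (k : ℕ) (hk : k ≠ 0) : k.primeFactors.card ≤ Nat.log 2 k := by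
  apply Nat.le_log_of_pow_le (by norm_num)
  calc 2 ^ k.primeFactors.card ≤ ∏ p ∈ k.primeFactors, p :=
        Finset.pow_card_le_prod _ _ _ fun p hp => (Nat.prime_of_mem_primeFactors hp).two_le
    _ ≤ k := Nat.le_of_dvd (Nat.pos_of_ne_zero hk) (Nat.prod_primeFactors_dvd k)

/-- A divisor with at most `r` prime factors is a product of at most `r` prime powers dividing `k`,
and there are at most `(log₂ k) ^ 2` prime powers greater than `1` dividing `k`. -/
lemma card_divisors_few_primes_le (k r : ℕ) (hk : k ≠ 0) :
    (k.divisors.filter (fun d => d.primeFactors.card ≤ r)).card ≤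
      ((Nat.log 2 k + 1) ^ 2) ^ r := by
  set Q : Finset ℕ := insert 1 ((k.primeFactors ×ˢ Finset.Icc 1 (Nat.log 2 k)).image
    fun x => x.1 ^ x.2) with hQ
  have hQc : Q.card ≤ (Nat.log 2 k + 1) ^ 2 := by
    calc Q.card ≤ _ + 1 := Finset.card_insert_le _ _
      _ ≤ k.primeFactors.card * Nat.log 2 k + 1 := by
          gcongr
          refine Finset.card_image_le.trans ?_
          simp
      _ ≤ Nat.log 2 k * Nat.log 2 k + 1 := by
          gcongr
          exact card_primeFactors_le_log k hk
      _ ≤ _ := by nlinarith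
  induction r with
  | zero =>
    rw [pow_zero]
    rw [Finset.card_le_one_iff]
    intro a c ha hc
    simp only [Finset.mem_filter, Nat.mem_divisors, nonpos_iff_eq_zero, Finset.card_eq_zero,
      Nat.primeFactors_eq_empty] at ha hc
    have h0 : a ≠ 0 := by rintro rfl; simp at ha
    have h0' : c ≠ 0 := by rintro rfl; simp at hc
    omega
  | succ r ih =>
    have hsub : k.divisors.filter (fun d => d.primeFactors.card ≤ r + 1) ⊆
        (Q ×ˢ k.divisors.filter (fun d => d.primeFactors.card ≤ r)).image
          (fun x => x.1 * x.2) := by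
      intro d hd
      simp only [Finset.mem_filter, Nat.mem_divisors] at hd
      obtain ⟨⟨hdk, -⟩, hdr⟩ := hd
      have hd0 : d ≠ 0 := ne_zero_of_dvd_ne_zero hk hdk
      simp only [Finset.mem_image, Finset.mem_product, Finset.mem_filter, Nat.mem_divisors,
        Prod.exists]
      by_cases h1 : d = 1
      · exact ⟨1, 1, ⟨by simp [hQ], ⟨one_dvd _, hk⟩, by simp⟩, by simp [h1]⟩
      · have hp := Nat.minFac_prime h1
        set p := d.minFac
        have hpd : p ∣ d := Nat.minFac_dvd d
        refine ⟨p ^ d.factorization p, d / p ^ d.factorization p, ⟨?_, ⟨?_, hk⟩, ?_⟩,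
          Nat.ordProj_mul_ordCompl_eq_self d p⟩
        · rw [hQ]
          apply Finset.mem_insert_of_mem
          refine Finset.mem_image.2 ⟨(p, d.factorization p), ?_, rfl⟩
          simp only [Finset.mem_product, Nat.mem_primeFactors, Finset.mem_Icc]
          refine ⟨⟨hp, hpd.trans hdk, hk⟩, hp.factorization_pos_of_dvd hd0 hpd, ?_⟩
          apply Nat.le_log_of_pow_le (by norm_num)
          calc 2 ^ d.factorization p ≤ p ^ d.factorization p := by
                gcongr; exact hp.two_le
            _ ≤ d := Nat.ordProj_le p hd0
            _ ≤ k := Nat.le_of_dvd (Nat.pos_of_ne_zero hk) hdk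
        · exact (Nat.ordCompl_dvd d p).trans hdk
        · have hmem : p ∈ d.primeFactors := Nat.mem_primeFactors.2 ⟨hp, hpd, hd0⟩
          have : (d / p ^ d.factorization p).primeFactors ⊆ d.primeFactors.erase p := by
            intro q hq
            refine Finset.mem_erase.2 ⟨?_, Nat.primeFactors_mono (Nat.ordCompl_dvd d p) hd0 hq⟩
            rintro rfl
            exact Nat.not_dvd_ordCompl hp hd0 (Nat.dvd_of_mem_primeFactors hq)
          have := Finset.card_le_card this
          rw [Finset.card_erase_of_mem hmem] at this
          omega
    calc _ ≤ _ := Finset.card_le_card hsub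
      _ ≤ _ := Finset.card_image_le
      _ = Q.card * (k.divisors.filter (fun d => d.primeFactors.card ≤ r)).card :=
          Finset.card_product _ _
      _ ≤ (Nat.log 2 k + 1) ^ 2 * ((Nat.log 2 k + 1) ^ 2) ^ r := Nat.mul_le_mul hQc ih
      _ = _ := by ring

/-! ### Counting the denominators for which `x / b n` is close to an integer -/

open Classical in
/-- If `x / b n` is within `δ` of the integer `j`, then `j * b n` lies within `δ * Y` of `x`. Hence
either `b n` has more than `r` prime factors, which is rare by Markov's inequality applied to
`m ^ ω` (first term), or `b n` is one of the few divisors with at most `r` prime factors of one of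
the at most `2 δ Y + 1` integers near `x` (second term). -/
lemma card_bad_le (N Y m r : ℕ) (b : ℕ → ℕ) (hm : 1 ≤ m)
    (hinj : Set.InjOn b (Finset.Icc 1 N : Finset ℕ))
    (hb : ∀ n ∈ Finset.Icc 1 N, 1 ≤ b n ∧ b n ≤ Y) (x δ : ℝ) (X : ℕ) (hδ : 0 ≤ δ)
    (hx : δ * Y < x) (hX : x + δ * Y ≤ X) :
    (((Finset.Icc 1 N).filter (fun n => ∃ j : ℤ, |x / b n - j| < δ)).card : ℝ) ≤
      Y * (1 + Real.log Y) ^ m / (m : ℝ) ^ (r + 1) +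
        (2 * (δ * Y) + 1) * (((Nat.log 2 X + 1) ^ 2) ^ r : ℕ) := by
  set w : ℝ := δ * Y with hw
  have hw0 : 0 ≤ w := by positivity
  set D : ℕ := ((Nat.log 2 X + 1) ^ 2) ^ r with hD
  set A := (Finset.Icc 1 Y).filter (fun d => r + 1 ≤ d.primeFactors.card) with hA
  set K := Finset.Icc ⌈x - w⌉₊ ⌊x + w⌋₊ with hK
  set B := K.biUnion (fun k => k.divisors.filter (fun d => d.primeFactors.card ≤ r)) with hB
  have hm0 : (0 : ℝ) < m := by exact_mod_cast hm
  have hAc : (A.card : ℝ) ≤ Y * (1 + Real.log Y) ^ m / (m : ℝ) ^ (r + 1) := by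
    rw [le_div_iff₀ (by positivity)]
    calc (A.card : ℝ) * (m : ℝ) ^ (r + 1) = ∑ d ∈ A, (m : ℝ) ^ (r + 1) := by simp
      _ ≤ ∑ d ∈ A, Y * ((m : ℝ) ^ d.primeFactors.card / d) := by
          apply Finset.sum_le_sum
          intro d hd
          obtain ⟨hd1, hd2⟩ := Finset.mem_filter.1 hd
          obtain ⟨hd3, hd4⟩ := Finset.mem_Icc.1 hd1
          have h1 : (m : ℝ) ^ (r + 1) ≤ (m : ℝ) ^ d.primeFactors.card :=
            pow_le_pow_right₀ (by exact_mod_cast hm) hd2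
          have h2 : (0 : ℝ) < d := by exact_mod_cast hd3
          have h3 : (d : ℝ) ≤ Y := by exact_mod_cast hd4
          rw [mul_div_assoc', le_div_iff₀ h2, mul_comm]
          gcongr
      _ ≤ ∑ d ∈ Finset.Icc 1 Y, Y * ((m : ℝ) ^ d.primeFactors.card / d) :=
          Finset.sum_le_sum_of_subset_of_nonneg (Finset.filter_subset _ _)
            fun _ _ _ => by positivity
      _ ≤ _ := by
          rw [← Finset.mul_sum]
          gcongr
          exact sum_pow_card_primeFactors_div_le Y m
  have hKc : (K.card : ℝ) ≤ 2 * w + 1 := by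
    rw [hK, Nat.card_Icc]
    have h1 : (⌊x + w⌋₊ : ℝ) ≤ x + w := Nat.floor_le (by linarith)
    have h2 : x - w ≤ ⌈x - w⌉₊ := Nat.le_ceil _
    rcases le_total ⌈x - w⌉₊ (⌊x + w⌋₊ + 1) with h | h
    · rw [Nat.cast_sub h]
      push_cast
      linarith
    · rw [Nat.sub_eq_zero_of_le h]
      push_cast
      linarith
  have hBc : (B.card : ℝ) ≤ (2 * w + 1) * D := by
    have : B.card ≤ K.card * D := by
      apply Finset.card_biUnion_le_card_mul
      intro k hk
      obtain ⟨hk1, hk2⟩ := Finset.mem_Icc.1 hk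
      have hk0 : k ≠ 0 := by
        have : 0 < ⌈x - w⌉₊ := Nat.ceil_pos.2 (by linarith)
        omega
      have hkX : k ≤ X := by
        have h1 : (⌊x + w⌋₊ : ℝ) ≤ x + w := Nat.floor_le (by linarith)
        have h2 : (⌊x + w⌋₊ : ℝ) ≤ X := h1.trans hX
        exact hk2.trans (by exact_mod_cast h2)
      refine (card_divisors_few_primes_le k r hk0).trans ?_
      rw [hD]
      gcongr
    calc (B.card : ℝ) ≤ K.card * D := by exact_mod_cast this
      _ ≤ _ := by gcongr
  have hcard : ((Finset.Icc 1 N).filter (fun n => ∃ j : ℤ, |x / b n - j| < δ)).card ≤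
      A.card + B.card := by
    refine le_trans ?_ (Finset.card_union_le A B)
    apply Finset.card_le_card_of_injOn b
    · intro n hn
      obtain ⟨hn1, j, hj⟩ := Finset.mem_filter.1 hn
      obtain ⟨hb1, hb2⟩ := hb n hn1
      have hb0 : (0 : ℝ) < b n := by exact_mod_cast hb1
      rw [Finset.mem_coe, Finset.mem_union]
      by_cases hr : r + 1 ≤ (b n).primeFactors.card
      · left
        exact Finset.mem_filter.2 ⟨Finset.mem_Icc.2 ⟨hb1, hb2⟩, hr⟩
      · right
        have h1 : |x - j * b n| < w := by
          have : x - j * b n = (x / b n - j) * b n := by field_simp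
          rw [this, abs_mul, abs_of_pos hb0]
          calc _ < δ * b n := by gcongr
            _ ≤ w := by
              rw [hw]
              have : (b n : ℝ) ≤ Y := by exact_mod_cast hb2
              gcongr
        obtain ⟨h2, h3⟩ := abs_lt.1 h1
        have hj0 : 0 ≤ j := by
          have : (0 : ℝ) < j * b n := by linarith
          have : (0 : ℝ) < j := by nlinarith
          exact_mod_cast this.le
        obtain ⟨i, rfl⟩ := Int.eq_ofNat_of_zero_le hj0
        simp only [Int.cast_natCast] at h2 h3
        have hi : i ≠ 0 := by
          rintro rfl
          simp at h3
          linarith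
        refine Finset.mem_biUnion.2 ⟨i * b n, Finset.mem_Icc.2 ⟨?_, ?_⟩, ?_⟩
        · apply Nat.ceil_le.2
          push_cast
          linarith
        · apply Nat.le_floor
          push_cast
          linarith
        · refine Finset.mem_filter.2 ⟨Nat.mem_divisors.2 ⟨Dvd.intro_left _ rfl, ?_⟩, by omega⟩
          exact Nat.mul_ne_zero hi (by omega)
    · exact hinj.mono fun n hn => (Finset.mem_filter.1 hn).1
  calc _ ≤ ((A.card + B.card : ℕ) : ℝ) := by exact_mod_cast hcard
    _ ≤ _ := by push_cast; linarith

/-! ### Decay of the partial products of cosines -/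

lemma abs_cos_pi_mul_le (y δ : ℝ) (hδ : 0 ≤ δ) (h : ∀ j : ℤ, δ ≤ |y - j|) :
    |Real.cos (π * y)| ≤ Real.exp (-2 * δ ^ 2) := by
  set t := y - round y with ht
  have ht2 : |t| ≤ 1 / 2 := abs_sub_round y
  have h1 : 2 * |t| ≤ |Real.sin (π * t)| := by
    have : |π * t| ≤ π / 2 := by
      rw [abs_mul, abs_of_pos pi_pos]; nlinarith [pi_pos]
    have := Real.mul_abs_le_abs_sin this
    rw [abs_mul, abs_of_pos pi_pos] at this
    have h3 : 2 / π * (π * |t|) = 2 * |t| := by field_simp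
    linarith
  have h2 : |Real.cos (π * y)| = |Real.cos (π * t)| := by
    have : π * t = π * y - (round y : ℤ) * π := by rw [ht]; ring
    rw [this, Real.cos_sub_int_mul_pi, abs_mul]
    simp
  rw [h2]
  have h3 : δ ≤ |t| := h _
  refine abs_le_of_sq_le_sq ?_ (Real.exp_pos _).le
  have h4 : Real.cos (π * t) ^ 2 ≤ 1 - 4 * δ ^ 2 := by
    rw [Real.cos_sq', ← sq_abs (Real.sin _)]
    nlinarith
  have h5 := Real.add_one_le_exp (-4 * δ ^ 2)
  rw [← Real.exp_nat_mul]
  calc _ ≤ _ := h4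
    _ ≤ Real.exp (-4 * δ ^ 2) := by linarith
    _ = _ := by congr 1; push_cast; ring

/-- The elementary inequalities in `l = log N` that make the two terms of `card_bad_le` at most
`N / 4` each, and the saving `exp (√N)` larger than `x ^ 2`. -/
lemma eventually_growth : ∀ᶠ l : ℝ in atTop,
    49 ≤ l ∧ (1 + 2 * l) ^ ⌈√l⌉₊ ≤ Real.exp (l / 100) / 4 ∧ 12 ≤ Real.exp (l / 25) ∧
      6 * l ^ 2 ≤ Real.exp (l / 2) := by
  have hs : ∀ᶠ s : ℝ in atTop, 1 + 2 * s ^ 2 ≤ Real.exp (s / 400) := by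
    have h := (isLittleO_pow_exp_pos_mul_atTop 2 (b := 1 / 400) (by norm_num)).bound
      (show (0 : ℝ) < 1 / 3 by norm_num)
    filter_upwards [h, eventually_ge_atTop 1] with s h1 h2
    rw [Real.norm_of_nonneg (by positivity), Real.norm_of_nonneg (by positivity)] at h1
    have : 1 / 400 * s = s / 400 := by ring
    rw [this] at h1
    nlinarith
  have h3 : ∀ᶠ l : ℝ in atTop, 6 * l ^ 2 ≤ Real.exp (l / 2) := by
    have h := (isLittleO_pow_exp_pos_mul_atTop 2 (b := 1 / 2) (by norm_num)).bound
      (show (0 : ℝ) < 1 / 6 by norm_num)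
    filter_upwards [h] with s h1
    rw [Real.norm_of_nonneg (by positivity), Real.norm_of_nonneg (by positivity)] at h1
    have : 1 / 2 * s = s / 2 := by ring
    rw [this] at h1
    linarith
  filter_upwards [eventually_ge_atTop 2200, Real.tendsto_sqrt_atTop.eventually hs, h3]
    with l h1 h2 h3
  refine ⟨by linarith, ?_, ?_, h3⟩
  · have hl : √l ^ 2 = l := Real.sq_sqrt (by linarith)
    have hs1 : 1 ≤ √l := Real.one_le_sqrt.2 (by linarith)
    rw [hl] at h2
    have hc : (⌈√l⌉₊ : ℝ) ≤ 2 * √l := by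
      have := Nat.ceil_lt_add_one (Real.sqrt_nonneg l)
      linarith
    have h4 : (4 : ℝ) ≤ Real.exp (l / 200) := by
      have := Real.add_one_le_exp (l / 200); linarith
    rw [le_div_iff₀ (by norm_num)]
    calc (1 + 2 * l) ^ ⌈√l⌉₊ * 4 ≤ Real.exp (√l / 400) ^ ⌈√l⌉₊ * Real.exp (l / 200) := by
          gcongr
      _ = Real.exp (⌈√l⌉₊ * (√l / 400) + l / 200) := by
          rw [← Real.exp_nat_mul, ← Real.exp_add]
      _ ≤ Real.exp (l / 100) := by
          apply Real.exp_le_exp.2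
          nlinarith
  · have := Real.add_one_le_exp (l / 25); linarith

set_option maxHeartbeats 1000000 in
open Classical in
/-- For `x` between `N ^ 2` and `exp (3 log² N)`, at least half of the `n ≤ N` have `x / b n` at
distance at least `δ = N ^ (-1 / 4)` from the integers, so the product is at most `exp (-√N)`.
This is where `b N ≤ N ^ (1 + o(1))` enters. -/
lemma prod_abs_cos_le (β : ℕ → ℝ) (hβ_lim : Tendsto β atTop (nhds 0)) (b : ℕ → ℕ)
    (hb_mono : ∀ m n : ℕ, 1 ≤ m → m < n → b m < b n)
    (hb_pos : ∀ n : ℕ, 1 ≤ n → 0 < b n)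
    (hb_ub : ∀ n : ℕ, 1 ≤ n → (b n : ℝ) ≤ (n : ℝ) ^ (1 + β n)) :
    ∀ᶠ N : ℕ in atTop, ∀ x : ℝ, (N : ℝ) ^ 2 ≤ x → x ≤ Real.exp (3 * Real.log N ^ 2) →
      ∏ n ∈ Finset.Icc 1 N, |Real.cos (π * x / b n)| ≤ 1 / x ^ 2 := by
  have hlog : Tendsto (fun N : ℕ => Real.log N) atTop atTop :=
    Real.tendsto_log_atTop.comp tendsto_natCast_atTop_atTop
  filter_upwards [hlog.eventually eventually_growth, hβ_lim.eventually_le_const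
    (show (0 : ℝ) < 1 / 100 by norm_num), eventually_ge_atTop 2] with N hN hβN hN2 x hx1 hx2
  obtain ⟨hl, hE1, hE2, hE3⟩ := hN
  set l := Real.log N with hldef
  have hN0 : (0 : ℝ) < N := by exact_mod_cast (by omega : 0 < N)
  have hNl : (N : ℝ) = Real.exp l := (Real.exp_log hN0).symm
  have hs : √l ^ 2 = l := Real.sq_sqrt (by linarith)
  have hs7 : 7 ≤ √l := Real.le_sqrt_of_sq_le (by linarith)
  -- With `m ≈ √l`, the average `(1 + log Y) ^ m` of `m ^ ω` is `N ^ o(1)`, while `log₂ X = O(l ^ 2)`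
  -- is bounded by a fixed power of `m`.
  set m := ⌈√l⌉₊ with hm
  have hms : √l ≤ m := Nat.le_ceil _
  have hm7 : (7 : ℝ) ≤ m := hs7.trans hms
  have hm1 : 1 < m := by exact_mod_cast (by linarith : (1 : ℝ) < m)
  -- `r` is chosen so that `m ^ r ≤ T ≤ m ^ (r + 1)` with `T = N ^ (1 / 50)`: the rare `b n` number
  -- at most `N ^ (1.01 + 0.01 - 0.02) / 4`, and the divisor bound `m ^ (10 r)` is at most
  -- `N ^ (1 / 5)`.
  set T := Real.exp (l / 50) with hT
  set r := Nat.log m ⌊T⌋₊ with hr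
  have hT1 : 1 ≤ T := Real.one_le_exp (by linarith)
  have hrT : (m : ℝ) ^ r ≤ T := by
    have h1 : m ^ r ≤ ⌊T⌋₊ := Nat.pow_log_le_self m (Nat.floor_pos.2 hT1).ne'
    calc (m : ℝ) ^ r ≤ ⌊T⌋₊ := by exact_mod_cast h1
      _ ≤ T := Nat.floor_le (by linarith)
  have hrT' : T ≤ (m : ℝ) ^ (r + 1) := by
    have h1 : ⌊T⌋₊ < m ^ (r + 1) := Nat.lt_pow_succ_log_self hm1 _
    have := (Nat.floor_lt (by linarith)).1 h1
    push_cast at this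
    exact this.le
  set Y := b N with hY
  have hY1 : 1 ≤ Y := hb_pos N (by omega)
  have hYle : (Y : ℝ) ≤ Real.exp (1.01 * l) := by
    calc (Y : ℝ) ≤ (N : ℝ) ^ (1 + β N) := hb_ub N (by omega)
      _ ≤ (N : ℝ) ^ (1.01 : ℝ) := by
          apply Real.rpow_le_rpow_of_exponent_le
          · exact_mod_cast (by omega : 1 ≤ N)
          · linarith
      _ = _ := by rw [Real.rpow_def_of_pos hN0, mul_comm]
  have hlogY : Real.log Y ≤ 1.01 * l := by
    rw [Real.log_le_iff_le_exp (by exact_mod_cast hY1)]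
    exact hYle
  have hlogY0 : 0 ≤ Real.log Y := Real.log_natCast_nonneg Y
  set δ := Real.exp (-(l / 4)) with hδ
  have hδY : δ * Y ≤ Real.exp (0.76 * l) := by
    calc δ * Y ≤ δ * Real.exp (1.01 * l) := by gcongr
      _ = _ := by rw [hδ, ← Real.exp_add]; congr 1; ring
  have hδYx : δ * Y < x := by
    calc δ * Y ≤ Real.exp (0.76 * l) := hδY
      _ < Real.exp (2 * l) := Real.exp_lt_exp.2 (by linarith)
      _ = (N : ℝ) ^ 2 := by rw [hNl, ← Real.exp_nat_mul]; norm_num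
      _ ≤ x := hx1
  have hx0 : 0 < x := lt_of_le_of_lt (by positivity) hδYx
  set X := ⌈2 * x⌉₊ with hX
  have hXle : x + δ * Y ≤ X := by
    have := Nat.le_ceil (2 * x)
    linarith
  have hlogX : Nat.log 2 X + 1 ≤ m ^ 5 := by
    have hXlt : (X : ℝ) ≤ Real.exp (3 * l ^ 2 + 2) := by
      have h1 := Nat.ceil_lt_add_one (show 0 ≤ 2 * x by linarith)
      have h2 : (1 : ℝ) ≤ Real.exp (3 * l ^ 2) := Real.one_le_exp (by positivity)
      have h3 := Real.add_one_le_exp (2 : ℝ)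
      rw [Real.exp_add]
      nlinarith
    have hX0 : X ≠ 0 := (Nat.ceil_pos.2 (by linarith)).ne'
    have h1 : (2 : ℝ) ^ Nat.log 2 X ≤ X := by exact_mod_cast Nat.pow_log_le_self 2 hX0
    have h2 : (Nat.log 2 X : ℝ) * Real.log 2 ≤ 3 * l ^ 2 + 2 := by
      rw [← Real.log_pow, Real.log_le_iff_le_exp (by positivity)]
      exact h1.trans hXlt
    have h3 := Real.log_two_gt_d9
    have h4 : (Nat.log 2 X : ℝ) ≤ 6 * l ^ 2 + 4 := by
      by_contra hcon
      push Not at hcon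
      nlinarith
    have h5 : 6 * l ^ 2 + 5 ≤ √l ^ 5 := by
      have : √l ^ 5 = √l * l ^ 2 := by
        rw [← hs]
        simp only [hs]
        calc √l ^ 5 = √l * (√l ^ 2) ^ 2 := by ring
          _ = _ := by rw [hs]
      rw [this]
      nlinarith
    have h6 : √l ^ 5 ≤ (m : ℝ) ^ 5 := by gcongr
    have : ((Nat.log 2 X + 1 : ℕ) : ℝ) ≤ ((m ^ 5 : ℕ) : ℝ) := by
      push_cast
      linarith
    exact_mod_cast this
  have hDle : (((Nat.log 2 X + 1) ^ 2) ^ r : ℕ) ≤ Real.exp (l / 5) := by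
    have h1 : ((Nat.log 2 X + 1) ^ 2) ^ r ≤ (m ^ r) ^ 10 := by
      calc ((Nat.log 2 X + 1) ^ 2) ^ r ≤ ((m ^ 5) ^ 2) ^ r := by gcongr
        _ = _ := by rw [← pow_mul, ← pow_mul, ← pow_mul]; ring_nf
    calc ((((Nat.log 2 X + 1) ^ 2) ^ r : ℕ) : ℝ) ≤ ((m : ℝ) ^ r) ^ 10 := by exact_mod_cast h1
      _ ≤ T ^ 10 := by gcongr
      _ = _ := by rw [hT, ← Real.exp_nat_mul]; congr 1; push_cast; ring
  have hmon : ∀ i j, 1 ≤ i → i ≤ j → b i ≤ b j := by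
    intro i j hi hij
    rcases hij.eq_or_lt with rfl | h
    · exact le_rfl
    · exact (hb_mono i j hi h).le
  have hbad := card_bad_le N Y m r b hm1.le (by
      intro i hi j hj hij
      simp only [Finset.coe_Icc, Set.mem_Icc] at hi hj
      rcases lt_trichotomy i j with h | h | h
      · exact absurd hij (hb_mono i j hi.1 h).ne
      · exact h
      · exact absurd hij.symm (hb_mono j i hj.1 h).ne) (by
      intro n hn
      obtain ⟨h1, h2⟩ := Finset.mem_Icc.1 hn
      exact ⟨hb_pos n h1, hmon n N h1 h2⟩) x δ X (Real.exp_pos _).le hδYx hXle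
  set bad := (Finset.Icc 1 N).filter (fun n => ∃ j : ℤ, |x / b n - j| < δ) with hbaddef
  have hbad2 : (bad.card : ℝ) ≤ N / 2 := by
    have h1 : Y * (1 + Real.log Y) ^ m / (m : ℝ) ^ (r + 1) ≤ N / 4 := by
      calc Y * (1 + Real.log Y) ^ m / (m : ℝ) ^ (r + 1)
          ≤ Real.exp (1.01 * l) * (1 + 2 * l) ^ m / T := by
            gcongr
            linarith
        _ ≤ Real.exp (1.01 * l) * (Real.exp (l / 100) / 4) / T := by gcongr
        _ = N / 4 := by
            rw [hT, hNl, div_eq_iff (Real.exp_pos _).ne', mul_div_assoc', div_mul_eq_mul_div,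
              ← Real.exp_add, ← Real.exp_add]
            congr 2
            ring
    have h2 : (2 * (δ * Y) + 1) * (((Nat.log 2 X + 1) ^ 2) ^ r : ℕ) ≤ N / 4 := by
      have h3 : (1 : ℝ) ≤ Real.exp (0.76 * l) := Real.one_le_exp (by linarith)
      calc (2 * (δ * Y) + 1) * (((Nat.log 2 X + 1) ^ 2) ^ r : ℕ)
          ≤ (3 * Real.exp (0.76 * l)) * Real.exp (l / 5) := by
            gcongr
            linarith
        _ = 3 * Real.exp (0.96 * l) := by
            rw [mul_assoc, ← Real.exp_add]; congr 2; ring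
        _ ≤ Real.exp (0.96 * l) * Real.exp (l / 25) / 4 := by
            nlinarith [Real.exp_pos (0.96 * l)]
        _ = N / 4 := by
            rw [← Real.exp_add, hNl]; congr 2; ring
    linarith
  set good := (Finset.Icc 1 N).filter (fun n => ¬ ∃ j : ℤ, |x / b n - j| < δ) with hgood
  have hgoodc : (N : ℝ) / 2 ≤ good.card := by
    have h1 : bad.card + good.card = N := by
      rw [hbaddef, hgood, Finset.card_filter_add_card_filter_not]
      simp
    have h2 : (bad.card : ℝ) + good.card = N := by exact_mod_cast h1
    linarith
  calc ∏ n ∈ Finset.Icc 1 N, |Real.cos (π * x / b n)|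
      ≤ ∏ n ∈ good, |Real.cos (π * x / b n)| :=
        Finset.prod_le_prod_of_subset_of_le_one (Finset.filter_subset _ _)
          (fun _ _ => abs_nonneg _) (fun _ _ _ => Real.abs_cos_le_one _)
    _ ≤ ∏ n ∈ good, Real.exp (-2 * δ ^ 2) := by
        apply Finset.prod_le_prod (fun _ _ => abs_nonneg _)
        intro n hn
        obtain ⟨-, h⟩ := Finset.mem_filter.1 hn
        push Not at h
        rw [mul_div_assoc]
        exact abs_cos_pi_mul_le _ δ (Real.exp_pos _).le h
    _ = Real.exp (-(2 * δ ^ 2 * good.card)) := by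
        rw [Finset.prod_const, ← Real.exp_nat_mul]; congr 1; ring
    _ ≤ Real.exp (-(6 * l ^ 2)) := by
        apply Real.exp_le_exp.2
        have h1 : δ ^ 2 * N = Real.exp (l / 2) := by
          rw [hδ, hNl, ← Real.exp_nat_mul, ← Real.exp_add]; congr 1; push_cast; ring
        nlinarith [sq_nonneg δ]
    _ = 1 / Real.exp (3 * l ^ 2) ^ 2 := by
        rw [← Real.exp_nat_mul, one_div, ← Real.exp_neg]; congr 1; push_cast; ring
    _ ≤ 1 / x ^ 2 := by gcongr

/-- An integrable majorant for the partial products, uniform in `N`, on the range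
`|x| ≤ exp (3 log² N)`. For `x ≤ N ^ 2` the factors with `n > √x` are discarded (each is at most
`1`), and `prod_abs_cos_le` is applied to the product up to `⌊√x⌋`. -/
lemma abs_prod_cos_le (β : ℕ → ℝ) (hβ_lim : Tendsto β atTop (nhds 0)) (b : ℕ → ℕ)
    (hb_mono : ∀ m n : ℕ, 1 ≤ m → m < n → b m < b n)
    (hb_pos : ∀ n : ℕ, 1 ≤ n → 0 < b n)
    (hb_ub : ∀ n : ℕ, 1 ≤ n → (b n : ℝ) ≤ (n : ℝ) ^ (1 + β n)) :
    ∃ K : ℝ, 0 < K ∧ ∃ N₁ : ℕ, ∀ N : ℕ, N₁ ≤ N → ∀ x : ℝ,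
      |x| ≤ Real.exp (3 * Real.log N ^ 2) →
      |∏ n ∈ Finset.Icc 1 N, Real.cos (π * x / b n)| ≤ K * (1 + x ^ 2)⁻¹ := by
  have hlog : Tendsto (fun N : ℕ => Real.log N) atTop atTop :=
    Real.tendsto_log_atTop.comp tendsto_natCast_atTop_atTop
  obtain ⟨N₁, hN₁⟩ := eventually_atTop.1 ((prod_abs_cos_le β hβ_lim b hb_mono hb_pos hb_ub).and
    ((hlog.eventually_ge_atTop 2).and (eventually_ge_atTop 1)))
  have habs : ∀ N : ℕ, ∀ x : ℝ, |∏ n ∈ Finset.Icc 1 N, Real.cos (π * x / b n)| =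
      ∏ n ∈ Finset.Icc 1 N, |Real.cos (π * |x| / b n)| := by
    intro N x
    rw [Finset.abs_prod]
    apply Finset.prod_congr rfl
    intro n _
    rcases abs_choice x with h | h
    · rw [h]
    · rw [h, mul_neg, neg_div, Real.cos_neg]
  set x₀ : ℝ := ((N₁ : ℝ) + 1) ^ 2 with hx₀
  have hx₀1 : 1 ≤ x₀ := by
    rw [hx₀]
    have : (0 : ℝ) ≤ N₁ := by positivity
    nlinarith
  refine ⟨1 + x₀ ^ 2, by positivity, N₁, fun N hN x hx => ?_⟩
  rw [habs, ← div_eq_mul_inv, le_div_iff₀ (by positivity), ← sq_abs x]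
  set y := |x| with hy
  have hy0 : 0 ≤ y := abs_nonneg x
  have hle1 : ∏ n ∈ Finset.Icc 1 N, |Real.cos (π * y / b n)| ≤ 1 :=
    Finset.prod_le_one (fun _ _ => abs_nonneg _) fun _ _ => Real.abs_cos_le_one _
  have hge0 : 0 ≤ ∏ n ∈ Finset.Icc 1 N, |Real.cos (π * y / b n)| :=
    Finset.prod_nonneg fun _ _ => abs_nonneg _
  rcases le_total y x₀ with h | h
  · calc _ ≤ 1 * (1 + y ^ 2) := by gcongr
      _ ≤ _ := by rw [one_mul]; gcongr
  have hmain : ∏ n ∈ Finset.Icc 1 N, |Real.cos (π * y / b n)| ≤ 1 / y ^ 2 := by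
    rcases le_total ((N : ℝ) ^ 2) y with h2 | h2
    · exact (hN₁ N hN).1 y h2 hx
    · set M := ⌊√y⌋₊ with hM
      have hM1 : (M : ℝ) ≤ √y := Nat.floor_le (Real.sqrt_nonneg y)
      have hM2 : √y < M + 1 := Nat.lt_floor_add_one _
      have hsq : √y ^ 2 = y := Real.sq_sqrt hy0
      have hMN₁ : N₁ ≤ M := by
        apply Nat.le_floor
        apply Real.le_sqrt_of_sq_le
        refine le_trans ?_ h
        rw [hx₀]
        gcongr
        linarith
      have hMN : M ≤ N := by
        have : √y ≤ N := Real.sqrt_le_iff.2 ⟨by positivity, h2⟩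
        exact_mod_cast hM1.trans this
      obtain ⟨hK, hl2, hMge⟩ := hN₁ M hMN₁
      have hM0 : (1 : ℝ) ≤ M := by exact_mod_cast hMge
      have hyM : y ≤ Real.exp (3 * Real.log M ^ 2) := by
        have hMexp : (M : ℝ) = Real.exp (Real.log M) := (Real.exp_log (by linarith)).symm
        have h2e : (2 : ℝ) ≤ Real.exp 1 := by
          have := Real.add_one_le_exp (1 : ℝ); linarith
        calc y ≤ (Real.exp 1 * M) ^ 2 := by
              rw [← hsq]
              gcongr
              nlinarith
          _ = Real.exp (2 * (1 + Real.log M)) := by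
              rw [hMexp, Real.log_exp, ← Real.exp_add, ← Real.exp_nat_mul]
              norm_num
          _ ≤ _ := by
              apply Real.exp_le_exp.2
              nlinarith
      refine le_trans ?_ (hK y (by rw [← hsq]; gcongr) hyM)
      apply Finset.prod_le_prod_of_subset_of_le_one (Finset.Icc_subset_Icc_right hMN)
        (fun _ _ => abs_nonneg _) (fun _ _ _ => Real.abs_cos_le_one _)
  have hy1 : 1 ≤ y := hx₀1.trans h
  calc _ ≤ 1 / y ^ 2 * (1 + y ^ 2) := by gcongr
    _ = 1 / y ^ 2 + 1 := by field_simp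
    _ ≤ 1 + x₀ ^ 2 := by
      have : 1 / y ^ 2 ≤ 1 := by rw [div_le_one (by positivity)]; nlinarith
      nlinarith

/-! ### Passing to the limit and Fourier analysis -/

section Fourier

open FourierTransform SchwartzMap

/-- Dominated convergence on the growing window `|2u| ≤ T N`, on which the majorant of `R N` is
available. -/
lemma tendsto_integral_truncated (R : ℕ → ℝ → ℝ) (ϱ : ℝ → ℝ) (hR : ∀ N, Continuous (R N))
    (T : ℕ → ℝ) (hT : Tendsto T atTop atTop)
    (hlim : ∀ x, Tendsto (fun N => R N x) atTop (nhds (ϱ x)))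
    (K : ℝ) (N₁ : ℕ) (hK : ∀ N, N₁ ≤ N → ∀ x, |x| ≤ T N → |R N x| ≤ K * (1 + x ^ 2)⁻¹) :
    Measurable ϱ ∧ (∀ x, |ϱ x| ≤ K * (1 + x ^ 2)⁻¹) ∧
    (∀ N, N₁ ≤ N → Integrable ({u : ℝ | |2 * u| ≤ T N}.indicator
        fun u => |R N (2 * u) - ϱ (2 * u)|)) ∧
    Tendsto (fun N => ∫ u, {u : ℝ | |2 * u| ≤ T N}.indicator
      (fun u => |R N (2 * u) - ϱ (2 * u)|) u) atTop (nhds 0) := by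
  have hmeas : Measurable ϱ :=
    measurable_of_tendsto_metrizable (fun N => (hR N).measurable) (tendsto_pi_nhds.2 hlim)
  have hϱ : ∀ x, |ϱ x| ≤ K * (1 + x ^ 2)⁻¹ := by
    intro x
    refine le_of_tendsto (hlim x).abs ?_
    filter_upwards [eventually_ge_atTop N₁, hT.eventually_ge_atTop |x|] with N h1 h2
    exact hK N h1 x h2
  have hF : ∀ N, Measurable ({u : ℝ | |2 * u| ≤ T N}.indicator
        fun u => |R N (2 * u) - ϱ (2 * u)|) := by
    intro N
    apply Measurable.indicator
    · have h1 := (hR N).measurable.comp (measurable_const_mul (2 : ℝ))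
      have h2 := hmeas.comp (measurable_const_mul (2 : ℝ))
      exact continuous_abs.measurable.comp (h1.sub h2)
    · exact measurableSet_le (by fun_prop) measurable_const
  have hdomint : Integrable fun u : ℝ => 2 * K * (1 + (2 * u) ^ 2)⁻¹ :=
    (integrable_inv_one_add_sq.comp_mul_left' (two_ne_zero)).const_mul _
  have hdom : ∀ N, N₁ ≤ N → ∀ u, ‖{u : ℝ | |2 * u| ≤ T N}.indicator
        (fun u => |R N (2 * u) - ϱ (2 * u)|) u‖ ≤ 2 * K * (1 + (2 * u) ^ 2)⁻¹ := by
    intro N hN u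
    rw [Set.indicator_apply]
    have h2 := hϱ (2 * u)
    split_ifs with h
    · rw [Real.norm_eq_abs, abs_abs]
      have h1 := hK N hN _ h
      have := abs_sub (R N (2 * u)) (ϱ (2 * u))
      linarith
    · rw [norm_zero]
      have := abs_nonneg (ϱ (2 * u))
      linarith
  refine ⟨hmeas, hϱ, fun N hN => ?_, ?_⟩
  · exact hdomint.mono' (hF N).aestronglyMeasurable (Eventually.of_forall (hdom N hN))
  · rw [← integral_zero ℝ ℝ]
    refine tendsto_integral_filter_of_dominated_convergence _
      (Eventually.of_forall fun N => (hF N).aestronglyMeasurable) ?_ hdomint ?_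
    · filter_upwards [eventually_ge_atTop N₁] with N hN
      exact Eventually.of_forall (hdom N hN)
    · refine Eventually.of_forall fun u => ?_
      have h : Tendsto (fun N => |R N (2 * u) - ϱ (2 * u)|) atTop (nhds 0) := by
        have := ((hlim (2 * u)).sub_const (ϱ (2 * u))).abs
        simpa using this
      refine squeeze_zero (fun N => ?_) (fun N => ?_) h
      · exact Set.indicator_nonneg (fun _ _ => abs_nonneg _) u
      · exact Set.indicator_le_self' (fun _ _ => abs_nonneg _) u

/-- The characteristic function of the random signed sum is the product of the cosines. -/
lemma sum_signs_exp (b : ℕ → ℕ) (N : ℕ) (t : ℝ) :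
    ∑ s : Fin N → ({-1, 1} : Finset ℝ),
      Complex.exp ((t * ∑ n : Fin N, (s n : ℝ) / (b ((n : ℕ) + 1) : ℝ) : ℝ) * Complex.I) =
      2 ^ N * ((∏ n ∈ Finset.Icc 1 N, Real.cos (t / b n) : ℝ) : ℂ) := by
  have h1 : ∀ s : Fin N → ({-1, 1} : Finset ℝ),
      Complex.exp ((t * ∑ n : Fin N, (s n : ℝ) / (b ((n : ℕ) + 1) : ℝ) : ℝ) * Complex.I) =
      ∏ n : Fin N, Complex.exp ((t * ((s n : ℝ) / (b ((n : ℕ) + 1) : ℝ)) : ℝ) * Complex.I) := by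
    intro s
    rw [← Complex.exp_sum, Finset.mul_sum]
    push_cast
    rw [Finset.sum_mul]
  simp_rw [h1]
  rw [← Fintype.prod_sum (fun (n : Fin N) (s : ({-1, 1} : Finset ℝ)) =>
    Complex.exp ((t * ((s : ℝ) / (b ((n : ℕ) + 1) : ℝ)) : ℝ) * Complex.I))]
  have h2 : ∀ n : Fin N, ∑ s : ({-1, 1} : Finset ℝ),
      Complex.exp ((t * ((s : ℝ) / (b ((n : ℕ) + 1) : ℝ)) : ℝ) * Complex.I) =
      2 * ((Real.cos (t / b (n + 1)) : ℝ) : ℂ) := by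
    intro n
    rw [Finset.sum_coe_sort ({-1, 1} : Finset ℝ)
      (fun s => Complex.exp ((t * (s / (b ((n : ℕ) + 1) : ℝ)) : ℝ) * Complex.I)),
      Finset.sum_pair (by norm_num)]
    push_cast
    rw [Complex.two_cos]
    ring_nf
  simp_rw [h2]
  rw [Finset.prod_mul_distrib]
  simp only [Finset.prod_const, Finset.card_univ, Fintype.card_fin]
  congr 1
  rw [Fin.prod_univ_eq_prod_range (fun n => ((Real.cos (t / b (n + 1)) : ℝ) : ℂ)) N]
  push_cast
  rw [Finset.range_eq_Ico, Finset.prod_Ico_add' (fun n => Complex.cos (t / b n)) 0 N 1]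
  rfl

/-- The expectation of a rescaled Schwartz function of the random signed sum, by Fourier
inversion. -/
lemma avg_schwartz (b : ℕ → ℕ) (N : ℕ) (ψ : 𝓢(ℝ, ℂ)) (a L : ℝ) :
    (∑ s : Fin N → ({-1, 1} : Finset ℝ),
      ψ (((∑ n : Fin N, (s n : ℝ) / (b ((n : ℕ) + 1) : ℝ)) - a) / L)) / 2 ^ N =
    ∫ v : ℝ, 𝓕 ψ v * (Complex.exp ((-2 * π * (v / L) * a : ℝ) * Complex.I) *
      ((∏ n ∈ Finset.Icc 1 N, Real.cos (π * (2 * (v / L)) / b n) : ℝ) : ℂ)) := by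
  have hinv : ∀ y : ℝ, ψ y = ∫ v : ℝ, Complex.exp ((2 * π * v * y : ℝ) * Complex.I) * 𝓕 ψ v := by
    intro y
    have h : 𝓕⁻ (𝓕 ψ) = ψ := FourierPair.fourierInv_fourier_eq ψ
    conv_lhs => rw [← h, SchwartzMap.fourierInv_coe, Real.fourierInv_eq']
    apply integral_congr_ae
    refine Eventually.of_forall fun v => ?_
    simp only [smul_eq_mul]
    congr 3
    simp
    ring
  have hint : ∀ y : ℝ, Integrable fun v : ℝ =>
      Complex.exp ((2 * π * v * y : ℝ) * Complex.I) * 𝓕 ψ v := by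
    intro y
    refine (𝓕 ψ).integrable.bdd_mul (c := 1) ?_ ?_
    · exact Continuous.aestronglyMeasurable (by fun_prop)
    · refine Eventually.of_forall fun v => ?_
      rw [Complex.norm_exp_ofReal_mul_I]
  simp_rw [hinv]
  rw [← integral_finsetSum _ fun s _ => hint _, ← integral_div]
  apply integral_congr_ae
  refine Eventually.of_forall fun v => ?_
  simp only []
  have h := sum_signs_exp b N (2 * π * (v / L))
  have h3 : ∀ s : Fin N → ({-1, 1} : Finset ℝ),
      Complex.exp ((2 * π * v * (((∑ n : Fin N, (s n : ℝ) / (b ((n : ℕ) + 1) : ℝ)) - a) / L) : ℝ)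
        * Complex.I) =
      Complex.exp ((-2 * π * (v / L) * a : ℝ) * Complex.I) *
      Complex.exp ((2 * π * (v / L) * ∑ n : Fin N, (s n : ℝ) / (b ((n : ℕ) + 1) : ℝ) : ℝ)
        * Complex.I) := by
    intro s
    rw [← Complex.exp_add, ← add_mul, ← Complex.ofReal_add]
    congr 3
    ring
  simp_rw [h3]
  rw [← Finset.sum_mul, ← Finset.mul_sum, h]
  have h4 : ∀ n, 2 * π * (v / L) / (b n : ℝ) = π * (2 * (v / L)) / b n := by
    intro n; ring
  simp_rw [h4]
  field_simp

/-- The analogue of `avg_schwartz` for the density `𝓕 f`, by the self-adjointness of the Fourier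
transform; the function `f` plays the role of the product of cosines. -/
lemma integral_schwartz_mul_fourier (ψ : 𝓢(ℝ, ℂ)) (f : ℝ → ℂ) (hf : Integrable f) (a L : ℝ)
    (hL : 0 < L) :
    ∫ y : ℝ, ψ y * (L * 𝓕 f (a + L * y)) =
    ∫ v : ℝ, 𝓕 ψ v * (Complex.exp ((-2 * π * (v / L) * a : ℝ) * Complex.I) * f (v / L)) := by
  set G : ℝ → ℂ := fun v => Complex.exp ((-2 * π * (v / L) * a : ℝ) * Complex.I) * f (v / L)
    with hG
  have hGint : Integrable G := by
    refine (hf.comp_div hL.ne').bdd_mul (c := 1) ?_ ?_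
    · exact Continuous.aestronglyMeasurable (by fun_prop)
    · refine Eventually.of_forall fun v => ?_
      rw [Complex.norm_exp_ofReal_mul_I]
  have hGF : ∀ y : ℝ, 𝓕 G y = L * 𝓕 f (a + L * y) := by
    intro y
    rw [Real.fourier_real_eq_integral_exp_smul, Real.fourier_real_eq_integral_exp_smul]
    have := Measure.integral_comp_div (fun u : ℝ =>
      Complex.exp ((-2 * π * u * (a + L * y) : ℝ) * Complex.I) • f u) L
    rw [abs_of_pos hL, Complex.real_smul] at this
    rw [← this]
    apply integral_congr_ae
    refine Eventually.of_forall fun v => ?_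
    simp only [hG, smul_eq_mul]
    rw [← mul_assoc, ← Complex.exp_add, ← add_mul, ← Complex.ofReal_add]
    congr 4
    field_simp
    ring
  have hflip := VectorFourier.integral_bilin_fourierIntegral_eq_flip (.mul ℂ ℂ) (L := innerₗ ℝ)
    (μ := volume) (ν := volume) continuous_fourierChar continuous_inner ψ.integrable hGint
  have hflip2 : ∫ v : ℝ, 𝓕 ψ v * G v = ∫ y : ℝ, ψ y * 𝓕 G y := by
    simpa using! hflip
  rw [hflip2]
  simp_rw [hGF]

/-- Equidistribution against a rescaled Schwartz function, with error at most `ε * L` uniformly in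
the position `a` and the scale `L > exp (-log² N)`. The two sides are Fourier integrals differing
in the product of cosines. On `|2u| ≤ exp (3 log² N)` the difference tends to `0` in `L¹`; beyond
that, `|L u| ≥ exp (2 log² N) / 2` and the decay of `𝓕 ψ` takes over. -/
lemma schwartz_test_bound (b : ℕ → ℕ) (ϱ : ℝ → ℝ) (K : ℝ) (N₁ : ℕ)
    (hlim : ∀ x, Tendsto (fun N => ∏ n ∈ Finset.Icc 1 N, Real.cos (π * x / b n)) atTop
      (nhds (ϱ x)))
    (hK : ∀ N, N₁ ≤ N → ∀ x : ℝ, |x| ≤ Real.exp (3 * Real.log N ^ 2) →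
      |∏ n ∈ Finset.Icc 1 N, Real.cos (π * x / b n)| ≤ K * (1 + x ^ 2)⁻¹)
    (ψ : 𝓢(ℝ, ℂ)) (ε : ℝ) (hε : 0 < ε) :
    ∀ᶠ N : ℕ in atTop, ∀ a L : ℝ, Real.exp (-Real.log N ^ 2) < L →
      ‖(∑ s : Fin N → ({-1, 1} : Finset ℝ),
          ψ (((∑ n : Fin N, (s n : ℝ) / (b ((n : ℕ) + 1) : ℝ)) - a) / L)) / 2 ^ N -
        ∫ y : ℝ, ψ y * (L * 𝓕 (fun u : ℝ => (ϱ (2 * u) : ℂ)) (a + L * y))‖ ≤ ε * L := by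
  set R : ℕ → ℝ → ℝ := fun N x => ∏ n ∈ Finset.Icc 1 N, Real.cos (π * x / b n) with hRdef
  have hlog : Tendsto (fun N : ℕ => Real.log N) atTop atTop :=
    Real.tendsto_log_atTop.comp tendsto_natCast_atTop_atTop
  have hsq : Tendsto (fun N : ℕ => Real.log N ^ 2) atTop atTop :=
    (tendsto_pow_atTop two_ne_zero).comp hlog
  set T : ℕ → ℝ := fun N => Real.exp (3 * Real.log N ^ 2) with hTdef
  have hT : Tendsto T atTop atTop :=
    Real.tendsto_exp_atTop.comp (hsq.const_mul_atTop (by norm_num))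
  have hRc : ∀ N, Continuous (R N) := fun N => by
    simp only [hRdef]
    fun_prop
  obtain ⟨hϱm, hϱb, hFint, hFlim⟩ := tendsto_integral_truncated R ϱ hRc T hT hlim K N₁ hK
  set F : ℕ → ℝ → ℝ := fun N => {u : ℝ | |2 * u| ≤ T N}.indicator
      (fun u => |R N (2 * u) - ϱ (2 * u)|) with hFdef
  have hR1 : ∀ N x, |R N x| ≤ 1 := fun N x => by
    rw [hRdef]
    simp only []
    rw [Finset.abs_prod]
    exact Finset.prod_le_one (fun _ _ => abs_nonneg _) fun _ _ => Real.abs_cos_le_one _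
  have hϱ1 : ∀ x, |ϱ x| ≤ 1 := fun x =>
    le_of_tendsto (hlim x).abs (Eventually.of_forall fun N => hR1 N x)
  have hfint : Integrable (fun u : ℝ => (ϱ (2 * u) : ℂ)) := by
    apply Integrable.ofReal
    have : Integrable ϱ := (integrable_inv_one_add_sq.const_mul K).mono'
      hϱm.aestronglyMeasurable (Eventually.of_forall fun x => hϱb x)
    exact this.comp_mul_left' two_ne_zero
  obtain ⟨A₀, hA₀, hA₀'⟩ := (𝓕 ψ).decay 0 0
  obtain ⟨A₄, hA₄, hA₄'⟩ := (𝓕 ψ).decay 4 0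
  simp only [pow_zero, one_mul, norm_iteratedFDeriv_zero] at hA₀' hA₄'
  have hBlim : Tendsto (fun N : ℕ => A₀ * (∫ u, F N u) +
      40 * A₄ * π * Real.exp (-(2 * Real.log N ^ 2))) atTop (nhds 0) := by
    have h1 := hFlim.const_mul A₀
    have h2 : Tendsto (fun N : ℕ => Real.exp (-(2 * Real.log N ^ 2))) atTop (nhds 0) :=
      Real.tendsto_exp_neg_atTop_nhds_zero.comp (hsq.const_mul_atTop (by norm_num))
    have h3 := h1.add (h2.const_mul (40 * A₄ * π))
    rw [mul_zero, mul_zero, add_zero] at h3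
    exact h3
  filter_upwards [hBlim.eventually_le_const hε, eventually_ge_atTop N₁] with N hN hN1 a L hL
  have hL0 : 0 < L := (Real.exp_pos _).trans hL
  have hT1 : 1 ≤ T N := Real.one_le_exp (by positivity)
  rw [avg_schwartz, integral_schwartz_mul_fourier ψ _ hfint a L hL0]
  set e : ℝ → ℂ := fun v => Complex.exp ((-2 * π * (v / L) * a : ℝ) * Complex.I) with he
  have hen : ∀ v, ‖e v‖ = 1 := fun v => by
    rw [he]; simp only []; rw [Complex.norm_exp_ofReal_mul_I]
  have hec : Continuous e := by rw [he]; fun_prop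
  have hψint := (𝓕 ψ).integrable (μ := volume)
  have hi1 : Integrable fun v : ℝ => 𝓕 ψ v * (e v * (R N (2 * (v / L)) : ℂ)) := by
    refine hψint.mul_bdd (c := 1) ?_ ?_
    · have := hRc N
      exact Continuous.aestronglyMeasurable (by fun_prop)
    · refine Eventually.of_forall fun v => ?_
      rw [norm_mul, hen, one_mul, Complex.norm_real]
      exact hR1 _ _
  have hi2 : Integrable fun v : ℝ => 𝓕 ψ v * (e v * (ϱ (2 * (v / L)) : ℂ)) := by
    refine hψint.mul_bdd (c := 1) ?_ ?_
    · apply hec.aestronglyMeasurable.mul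
      apply Measurable.aestronglyMeasurable
      exact Complex.measurable_ofReal.comp (hϱm.comp (by fun_prop))
    · refine Eventually.of_forall fun v => ?_
      rw [norm_mul, hen, one_mul, Complex.norm_real]
      exact hϱ1 _
  change ‖(∫ v : ℝ, 𝓕 ψ v * (e v * (R N (2 * (v / L)) : ℂ))) -
    ∫ v : ℝ, 𝓕 ψ v * (e v * (ϱ (2 * (v / L)) : ℂ))‖ ≤ _
  rw [← integral_sub hi1 hi2]
  have hnorm : ∀ v : ℝ, ‖𝓕 ψ v * (e v * (R N (2 * (v / L)) : ℂ)) -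
      𝓕 ψ v * (e v * (ϱ (2 * (v / L)) : ℂ))‖ =
      ‖𝓕 ψ (L * (v / L))‖ * |R N (2 * (v / L)) - ϱ (2 * (v / L))| := by
    intro v
    rw [← mul_sub, ← mul_sub, norm_mul, norm_mul, hen, one_mul, ← Complex.ofReal_sub,
      Complex.norm_real, Real.norm_eq_abs, mul_div_cancel₀ _ hL0.ne']
  set E : ℝ := 40 * A₄ * Real.exp (-(2 * Real.log N ^ 2)) with hE
  have hE0 : 0 ≤ E := by positivity
  have hpt : ∀ u : ℝ, ‖𝓕 ψ (L * u)‖ * |R N (2 * u) - ϱ (2 * u)| ≤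
      A₀ * F N u + E * (1 + u ^ 2)⁻¹ := by
    intro u
    by_cases hu : |2 * u| ≤ T N
    · have : F N u = |R N (2 * u) - ϱ (2 * u)| :=
        Set.indicator_of_mem (show u ∈ {u : ℝ | |2 * u| ≤ T N} from hu) _
      rw [this]
      have h1 := hA₀' (L * u)
      have : 0 ≤ E * (1 + u ^ 2)⁻¹ := by positivity
      have : ‖𝓕 ψ (L * u)‖ * |R N (2 * u) - ϱ (2 * u)| ≤ A₀ * |R N (2 * u) - ϱ (2 * u)| := by
        gcongr
      linarith
    · have : F N u = 0 :=
        Set.indicator_of_notMem (show u ∉ {u : ℝ | |2 * u| ≤ T N} from hu) _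
      rw [this, mul_zero, zero_add]
      push Not at hu
      have h2 : |R N (2 * u) - ϱ (2 * u)| ≤ 2 := by
        have := abs_sub (R N (2 * u)) (ϱ (2 * u))
        linarith [hR1 N (2 * u), hϱ1 (2 * u)]
      have h3 : T N ^ 2 ≤ 4 * u ^ 2 := by
        have : T N ^ 2 ≤ |2 * u| ^ 2 := by gcongr
        rw [sq_abs] at this
        linarith
      have h4 := hA₄' (L * u)
      rw [Real.norm_eq_abs, Even.pow_abs (by decide : Even 4)] at h4
      have h5 : 1 ≤ L ^ 4 * T N ^ 2 * Real.exp (-(2 * Real.log N ^ 2)) := by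
        have h6 : Real.exp (-Real.log N ^ 2) ^ 4 ≤ L ^ 4 := by gcongr
        calc (1 : ℝ) = Real.exp (-Real.log N ^ 2) ^ 4 * T N ^ 2 *
              Real.exp (-(2 * Real.log N ^ 2)) := by
              rw [hTdef]
              simp only []
              rw [← Real.exp_nat_mul, ← Real.exp_nat_mul, ← Real.exp_add, ← Real.exp_add]
              rw [eq_comm, Real.exp_eq_one_iff]
              push_cast
              ring
          _ ≤ _ := by gcongr
      have h7 : 1 + u ^ 2 ≤ 5 * u ^ 2 := by nlinarith
      have hz : 0 ≤ ‖𝓕 ψ (L * u)‖ := norm_nonneg _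
      set z := ‖𝓕 ψ (L * u)‖
      set q := Real.exp (-(2 * Real.log N ^ 2))
      have hq : 0 < q := Real.exp_pos _
      have h8 : z * (1 + u ^ 2) ≤ 20 * A₄ * q := by
        calc z * (1 + u ^ 2) ≤ z * (5 * u ^ 2) * 1 := by rw [mul_one]; gcongr
          _ ≤ z * (5 * u ^ 2) * (L ^ 4 * T N ^ 2 * q) := by gcongr
          _ ≤ z * (5 * u ^ 2) * (L ^ 4 * (4 * u ^ 2) * q) := by gcongr
          _ = 20 * ((L * u) ^ 4 * z) * q := by ring
          _ ≤ _ := by gcongr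
      rw [← div_eq_mul_inv, le_div_iff₀ (by positivity)]
      calc z * |R N (2 * u) - ϱ (2 * u)| * (1 + u ^ 2) ≤ z * 2 * (1 + u ^ 2) := by gcongr
        _ = 2 * (z * (1 + u ^ 2)) := by ring
        _ ≤ E := by rw [hE]; linarith
  have hbint : Integrable fun u : ℝ => A₀ * F N u + E * (1 + u ^ 2)⁻¹ :=
    ((hFint N hN1).const_mul _).add (integrable_inv_one_add_sq.const_mul _)
  calc _ ≤ ∫ v : ℝ, ‖𝓕 ψ v * (e v * (R N (2 * (v / L)) : ℂ)) -
        𝓕 ψ v * (e v * (ϱ (2 * (v / L)) : ℂ))‖ := norm_integral_le_integral_norm _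
    _ ≤ ∫ v : ℝ, (A₀ * F N (v / L) + E * (1 + (v / L) ^ 2)⁻¹) := by
        apply integral_mono (hi1.sub hi2).norm (hbint.comp_div hL0.ne')
        intro v
        exact (hnorm v).le.trans (hpt _)
    _ = L * ∫ u : ℝ, (A₀ * F N u + E * (1 + u ^ 2)⁻¹) := by
        rw [Measure.integral_comp_div (fun u : ℝ => A₀ * F N u + E * (1 + u ^ 2)⁻¹) L,
          abs_of_pos hL0, smul_eq_mul]
    _ = L * (A₀ * (∫ u, F N u) + E * π) := by
        rw [integral_add ((hFint N hN1).const_mul _) (integrable_inv_one_add_sq.const_mul _),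
          integral_const_mul, integral_const_mul, integral_univ_inv_one_add_sq]
    _ ≤ L * ε := by
        gcongr
        refine le_trans (le_of_eq ?_) hN
        rw [hE]
        ring
    _ = ε * L := mul_comm _ _

/-- The Fourier transform of the even function `u ↦ ϱ (2u)` as a cosine integral over the half
line. -/
lemma fourier_even_eq (ϱ : ℝ → ℝ) (hm : Integrable fun u : ℝ => ϱ (2 * u))
    (heven : ∀ x, ϱ (-x) = ϱ x) (x : ℝ) :
    𝓕 (fun u : ℝ => (ϱ (2 * u) : ℂ)) x =
      ((2 * ∫ u in Set.Ioi (0 : ℝ), Real.cos (2 * π * u * x) * ϱ (2 * u) : ℝ) : ℂ) := by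
  have hint : ∀ s : ℝ, Integrable fun u : ℝ =>
      Complex.exp ((s * (2 * π * u * x) : ℝ) * Complex.I) * (ϱ (2 * u) : ℂ) := by
    intro s
    refine hm.ofReal.bdd_mul (c := 1) ?_ ?_
    · exact Continuous.aestronglyMeasurable (by fun_prop)
    · refine Eventually.of_forall fun v => ?_
      rw [Complex.norm_exp_ofReal_mul_I]
  have h1 : 𝓕 (fun u : ℝ => (ϱ (2 * u) : ℂ)) x = ∫ u : ℝ,
      Complex.exp (((-1) * (2 * π * u * x) : ℝ) * Complex.I) * (ϱ (2 * u) : ℂ) := by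
    rw [Real.fourier_real_eq_integral_exp_smul]
    apply integral_congr_ae
    refine Eventually.of_forall fun v => ?_
    simp only [smul_eq_mul]
    congr 4
    ring
  have h2 : 𝓕 (fun u : ℝ => (ϱ (2 * u) : ℂ)) x = ∫ u : ℝ,
      Complex.exp ((1 * (2 * π * u * x) : ℝ) * Complex.I) * (ϱ (2 * u) : ℂ) := by
    rw [h1, ← integral_neg_eq_self]
    apply integral_congr_ae
    refine Eventually.of_forall fun v => ?_
    simp only []
    rw [mul_neg 2 v, heven]
    congr 4
    ring
  have h3 : 2 * 𝓕 (fun u : ℝ => (ϱ (2 * u) : ℂ)) x =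
      2 * ((∫ u : ℝ, Real.cos (2 * π * u * x) * ϱ (2 * u) : ℝ) : ℂ) := by
    rw [two_mul]
    conv_lhs => rw [h1]
    conv_lhs => rw [← h1]; lhs; rw [h1]
    conv_lhs => rhs; rw [h2]
    rw [← integral_add (hint _) (hint _), ← integral_complex_ofReal, ← integral_const_mul]
    apply integral_congr_ae
    refine Eventually.of_forall fun v => ?_
    simp only []
    push_cast
    rw [← mul_assoc 2 (Complex.cos _), Complex.two_cos]
    ring_nf
  have h4 : ∫ u : ℝ, Real.cos (2 * π * u * x) * ϱ (2 * u) =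
      2 * ∫ u in Set.Ioi (0 : ℝ), Real.cos (2 * π * u * x) * ϱ (2 * u) := by
    rw [← integral_comp_abs (f := fun u => Real.cos (2 * π * u * x) * ϱ (2 * u))]
    apply integral_congr_ae
    refine Eventually.of_forall fun v => ?_
    simp only []
    rcases abs_choice v with h | h
    · rw [h]
    · rw [h, mul_neg 2 v, heven, ← Real.cos_neg]
      ring_nf
  rw [← h4]
  exact mul_left_cancel₀ two_ne_zero h3

/-! ### Smooth approximation of the indicator of an interval -/

lemma exists_bump (r R' : ℝ) (h0 : 0 < r) (h1 : r < R') :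
    ∃ φ : ℝ → ℝ, ContDiff ℝ (⊤ : ℕ∞) φ ∧ HasCompactSupport φ ∧ (∀ y, 0 ≤ φ y) ∧ (∀ y, φ y ≤ 1) ∧
      (∀ y, |y - 1 / 2| ≤ r → φ y = 1) ∧ (∀ y, R' ≤ |y - 1 / 2| → φ y = 0) := by
  let φ : ContDiffBump (1 / 2 : ℝ) := ⟨r, R', h0, h1⟩
  refine ⟨φ, φ.contDiff, φ.hasCompactSupport, fun y => φ.nonneg, fun y => φ.le_one,
    fun y hy => φ.one_of_mem_closedBall (by rwa [Metric.mem_closedBall, Real.dist_eq]),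
    fun y hy => φ.zero_of_le_dist (by rwa [Real.dist_eq])⟩

/-- A bump that agrees with the indicator of `[0, 1]` outside the `η`-neighbourhoods of the two
endpoints integrates `g` over `[a, a + L]` up to `4 η G L`. -/
lemma integral_bump_sub (φ g : ℝ → ℝ) (G L η a : ℝ) (hη : 0 < η) (hL : 0 < L)
    (hG : ∀ x, |g x| ≤ G) (hgc : Continuous g) (hφc : Continuous φ)
    (hφs : HasCompactSupport φ) (h0 : ∀ y, 0 ≤ φ y) (h1 : ∀ y, φ y ≤ 1)
    (hin : ∀ y, |y - 1 / 2| ≤ 1 / 2 - η → φ y = 1) (hout : ∀ y, 1 / 2 + η ≤ |y - 1 / 2| → φ y = 0) :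
    |(∫ y, φ y * (L * g (a + L * y))) - ∫ x in Set.Icc a (a + L), g x| ≤ 4 * η * G * L := by
  have hG0 : 0 ≤ G := (abs_nonneg _).trans (hG 0)
  have hcv : ∫ x in Set.Icc a (a + L), g x =
      ∫ y, (Set.Icc (0 : ℝ) 1).indicator (fun y => L * g (a + L * y)) y := by
    rw [integral_indicator measurableSet_Icc, integral_Icc_eq_integral_Ioc,
      integral_Icc_eq_integral_Ioc, ← intervalIntegral.integral_of_le (by linarith),
      ← intervalIntegral.integral_of_le zero_le_one, intervalIntegral.integral_const_mul,
      intervalIntegral.mul_integral_comp_add_mul]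
    simp
  have hcont : Continuous fun y => L * g (a + L * y) := by fun_prop
  have hi1 : Integrable fun y => φ y * (L * g (a + L * y)) :=
    (hφc.mul hcont).integrable_of_hasCompactSupport hφs.mul_right
  have hi2 : Integrable ((Set.Icc (0 : ℝ) 1).indicator (fun y => L * g (a + L * y))) := by
    rw [integrable_indicator_iff measurableSet_Icc]
    exact hcont.continuousOn.integrableOn_Icc
  rw [hcv, ← integral_sub hi1 hi2]
  -- `S` majorizes the difference, which is supported near the two endpoints.
  set S : ℝ → ℝ := fun y => (Set.Icc (-η) η).indicator (fun _ => L * G) y +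
    (Set.Icc (1 - η) (1 + η)).indicator (fun _ => L * G) y with hS
  have hind : ∀ p q : ℝ, Integrable ((Set.Icc p q).indicator (fun _ : ℝ => L * G)) := by
    intro p q
    rw [integrable_indicator_iff measurableSet_Icc]
    exact continuous_const.continuousOn.integrableOn_Icc
  have hSi : Integrable S := (hind _ _).add (hind _ _)
  have hLG : 0 ≤ L * G := by positivity
  rw [← Real.norm_eq_abs]
  calc _ ≤ ∫ y, S y := by
        apply norm_integral_le_of_norm_le hSi
        refine Eventually.of_forall fun y => ?_
        have hgy : |L * g (a + L * y)| ≤ L * G := by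
          rw [abs_mul, abs_of_pos hL]
          gcongr
          exact hG _
        have hS0 : ∀ p q : ℝ, 0 ≤ (Set.Icc p q).indicator (fun _ : ℝ => L * G) y := fun p q =>
          Set.indicator_nonneg (fun _ _ => hLG) y
        have hbig : S y < L * G → ¬ (y ∈ Set.Icc (-η) η) ∧ ¬ (y ∈ Set.Icc (1 - η) (1 + η)) := by
          intro h
          constructor
          · intro hy
            have h1 := hS0 (1 - η) (1 + η)
            simp only [hS] at h
            rw [Set.indicator_of_mem hy] at h
            linarith
          · intro hy
            have h1 := hS0 (-η) η
            simp only [hS] at h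
            rw [Set.indicator_of_mem hy] at h
            linarith
        have hS0' : 0 ≤ S y := add_nonneg (hS0 _ _) (hS0 _ _)
        rcases le_or_gt (L * G) (S y) with h | h
        · refine le_trans ?_ h
          rw [Real.norm_eq_abs, Set.indicator_apply]
          split_ifs with hy
          · have : φ y * (L * g (a + L * y)) - L * g (a + L * y) =
              -((1 - φ y) * (L * g (a + L * y))) := by ring
            rw [this, abs_neg, abs_mul, abs_of_nonneg (by linarith [h1 y])]
            have := h0 y
            have := abs_nonneg (L * g (a + L * y))
            nlinarith [h1 y]
          · rw [sub_zero, abs_mul, abs_of_nonneg (h0 y)]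
            have := abs_nonneg (L * g (a + L * y))
            nlinarith [h1 y, h0 y]
        · obtain ⟨ha, hb⟩ := hbig h
          refine le_trans (le_of_eq ?_) hS0'
          rw [norm_eq_zero]
          simp only [Set.mem_Icc, not_and_or, not_le] at ha hb
          rw [Set.indicator_apply]
          split_ifs with hy
          · obtain ⟨hy0, hy1⟩ := hy
            rw [hin y, one_mul, sub_self]
            rw [abs_le]
            constructor
            · rcases ha with h | h <;> linarith
            · rcases hb with h | h <;> linarith
          · rw [hout y, zero_mul, sub_zero]
            rw [Set.mem_Icc, not_and_or, not_le, not_le] at hy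
            rw [le_abs]
            rcases hy with h | h
            · right
              rcases ha with h' | h' <;> linarith
            · left
              rcases hb with h' | h' <;> linarith
    _ = 4 * η * G * L := by
        rw [integral_add (hind _ _) (hind _ _), integral_indicator measurableSet_Icc,
          integral_indicator measurableSet_Icc, setIntegral_const, setIntegral_const,
          measureReal_def, measureReal_def, Real.volume_Icc, Real.volume_Icc,
          ENNReal.toReal_ofReal (by linarith), ENNReal.toReal_ofReal (by linarith)]
        simp only [smul_eq_mul]
        ring

/-! ### Conclusion -/

/-- `schwartz_test_bound` for real test functions, in terms of the real density `g`. -/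
lemma smooth_test_bound (b : ℕ → ℕ) (ϱ : ℝ → ℝ) (K : ℝ) (N₁ : ℕ)
    (hlim : ∀ x, Tendsto (fun N => ∏ n ∈ Finset.Icc 1 N, Real.cos (π * x / b n)) atTop
      (nhds (ϱ x)))
    (hK : ∀ N, N₁ ≤ N → ∀ x : ℝ, |x| ≤ Real.exp (3 * Real.log N ^ 2) →
      |∏ n ∈ Finset.Icc 1 N, Real.cos (π * x / b n)| ≤ K * (1 + x ^ 2)⁻¹)
    (g : ℝ → ℝ) (hg : ∀ x, 𝓕 (fun u : ℝ => (ϱ (2 * u) : ℂ)) x = (g x : ℂ))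
    (φ : ℝ → ℝ) (hφ : ContDiff ℝ (⊤ : ℕ∞) φ) (hφs : HasCompactSupport φ) (ε : ℝ) (hε : 0 < ε) :
    ∀ᶠ N : ℕ in atTop, ∀ a L : ℝ, Real.exp (-Real.log N ^ 2) < L →
      |(∑ s : Fin N → ({-1, 1} : Finset ℝ),
          φ (((∑ n : Fin N, (s n : ℝ) / (b ((n : ℕ) + 1) : ℝ)) - a) / L)) / 2 ^ N -
        ∫ y : ℝ, φ y * (L * g (a + L * y))| ≤ ε * L := by
  have hs : HasCompactSupport fun y => (φ y : ℂ) := hφs.comp_left Complex.ofReal_zero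
  have hc : ContDiff ℝ (⊤ : ℕ∞) fun y => (φ y : ℂ) := Complex.ofRealCLM.contDiff.comp hφ
  filter_upwards [schwartz_test_bound b ϱ K N₁ hlim hK (hs.toSchwartzMap hc) ε hε] with N hN a L hL
  have h := hN a L hL
  simp only [HasCompactSupport.toSchwartzMap_toFun, hg] at h
  rw [← Real.norm_eq_abs, ← Complex.norm_real]
  push_cast
  rw [← integral_complex_ofReal]
  push_cast
  exact h

lemma density_properties (ϱ : ℝ → ℝ) (hϱ : Integrable fun u : ℝ => ϱ (2 * u))
    (g : ℝ → ℝ) (hg : ∀ x, 𝓕 (fun u : ℝ => (ϱ (2 * u) : ℂ)) x = (g x : ℂ)) :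
    Continuous g ∧ ∀ x, |g x| ≤ ∫ u, |ϱ (2 * u)| := by
  constructor
  · have h : Continuous (𝓕 (fun u : ℝ => (ϱ (2 * u) : ℂ))) :=
      VectorFourier.fourierIntegral_continuous Real.continuous_fourierChar
        (by fun_prop) hϱ.ofReal
    have h2 : g = fun x => (𝓕 (fun u : ℝ => (ϱ (2 * u) : ℂ)) x).re := by
      ext x
      rw [hg, Complex.ofReal_re]
    rw [h2]
    exact Complex.continuous_re.comp h
  · intro x
    rw [← Real.norm_eq_abs, ← Complex.norm_real, ← hg]
    refine (VectorFourier.norm_fourierIntegral_le_integral_norm _ _ _ _ _).trans (le_of_eq ?_)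
    simp only [Complex.norm_real, Real.norm_eq_abs]

/-- All that the sandwiching argument needs to know about `g`: continuity, boundedness and
equidistribution against smooth bumps. -/
lemma exists_density_and_test_bound (β : ℕ → ℝ) (hβ_lim : Tendsto β atTop (nhds 0)) (b : ℕ → ℕ)
    (hb_mono : ∀ m n : ℕ, 1 ≤ m → m < n → b m < b n)
    (hb_pos : ∀ n : ℕ, 1 ≤ n → 0 < b n)
    (hb_ub : ∀ n : ℕ, 1 ≤ n → (b n : ℝ) ≤ (n : ℝ) ^ (1 + β n))
    (ϱ : ℝ → ℝ)
    (hϱ : ∀ x : ℝ, Tendsto (fun N : ℕ => ∏ n ∈ Finset.Icc 1 N, Real.cos (π * x / (b n : ℝ)))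
      atTop (nhds (ϱ x)))
    (g : ℝ → ℝ) (hg : ∀ x, g x =
      2 * ∫ u in Set.Ioi (0 : ℝ), Real.cos (2 * π * u * x) * ϱ (2 * u)) :
    Continuous g ∧ (∃ G, ∀ x, |g x| ≤ G) ∧
    ∀ φ : ℝ → ℝ, ContDiff ℝ (⊤ : ℕ∞) φ → HasCompactSupport φ → ∀ ε : ℝ, 0 < ε →
      ∀ᶠ N : ℕ in atTop, ∀ a L : ℝ, Real.exp (-Real.log N ^ 2) < L →
        |(∑ s : Fin N → ({-1, 1} : Finset ℝ),
            φ (((∑ n : Fin N, (s n : ℝ) / (b ((n : ℕ) + 1) : ℝ)) - a) / L)) / 2 ^ N -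
          ∫ y : ℝ, φ y * (L * g (a + L * y))| ≤ ε * L := by
  obtain ⟨K, -, N₁, hK⟩ := abs_prod_cos_le β hβ_lim b hb_mono hb_pos hb_ub
  have hT : Tendsto (fun N : ℕ => Real.exp (3 * Real.log N ^ 2)) atTop atTop :=
    Real.tendsto_exp_atTop.comp (((tendsto_pow_atTop two_ne_zero).comp
      (Real.tendsto_log_atTop.comp tendsto_natCast_atTop_atTop)).const_mul_atTop (by norm_num))
  obtain ⟨hm, hbd, -, -⟩ := tendsto_integral_truncated
    (fun N x => ∏ n ∈ Finset.Icc 1 N, Real.cos (π * x / b n)) ϱ (fun N => by fun_prop) _ hT hϱ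
    K N₁ hK
  have hint : Integrable fun u : ℝ => ϱ (2 * u) :=
    ((integrable_inv_one_add_sq.const_mul K).mono' hm.aestronglyMeasurable
      (Eventually.of_forall hbd)).comp_mul_left' two_ne_zero
  have heven : ∀ x, ϱ (-x) = ϱ x := fun x => by
    refine tendsto_nhds_unique (hϱ (-x)) ((hϱ x).congr fun N => ?_)
    refine Finset.prod_congr rfl fun n _ => ?_
    rw [mul_neg, neg_div, Real.cos_neg]
  have hF : ∀ x, 𝓕 (fun u : ℝ => (ϱ (2 * u) : ℂ)) x = (g x : ℂ) := fun x => by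
    rw [fourier_even_eq ϱ hint heven, hg]
  obtain ⟨h1, h2⟩ := density_properties ϱ hint g hF
  exact ⟨h1, ⟨_, h2⟩, fun φ hφ hφs ε hε =>
    smooth_test_bound b ϱ K N₁ hϱ hK g hF φ hφ hφs ε hε⟩

end Fourier

lemma card_eq_sum_indicator {N : ℕ} (X : (Fin N → ({-1, 1} : Finset ℝ)) → ℝ) (a L : ℝ)
    (hL : 0 < L) :
    (Nat.card {s : Fin N → ({-1, 1} : Finset ℝ) // X s ∈ Set.Icc a (a + L)} : ℝ) =
      ∑ s, (Set.Icc (0 : ℝ) 1).indicator 1 ((X s - a) / L) := by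
  classical
  rw [Nat.card_eq_fintype_card, Fintype.card_subtype, Finset.card_filter]
  push_cast
  refine Finset.sum_congr rfl fun s _ => ?_
  rw [Set.indicator_apply]
  have : (X s - a) / L ∈ Set.Icc (0 : ℝ) 1 ↔ X s ∈ Set.Icc a (a + L) := by
    rw [Set.mem_Icc, Set.mem_Icc, div_le_one hL, le_div_iff₀ hL]
    constructor <;> rintro ⟨h1, h2⟩ <;> constructor <;> linarith
  simp only [this, Pi.one_apply]

/-- **Theorem (small scale distribution of `X_N`, general case).**
Let `β : ℕ → ℝ` be decreasing with `β n → 0` and `β n ≤ 1/(8 log log n)` for all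
sufficiently large `n`, and let `(b n)_{n ≥ 1}` be a strictly increasing sequence
of positive integers with `n ≤ b n ≤ n ^ (1 + β n)`. Let
`ϱ(x) = ∏_{n=1}^∞ cos (π x / b n)` (the limit of the partial products) and
`g(x) = 2 ∫_0^∞ cos (2πux) ϱ(2u) du`. Then there is `C' > 0` such that for every
`ε > 0`, for all sufficiently large `N` and every interval `I = [a, c]` of length
`> exp (−C' (log N)²)`,
`|ℙ[X_N ∈ I] − ∫_I g| ≤ ε |I|`, where
`ℙ[X_N ∈ I] = 2^{−N} #{s ∈ {−1,1}^N : ∑_{n=1}^N s n / b n ∈ I}`. -/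
theorem small_scale_distribution_general
    (β : ℕ → ℝ) (hβ_anti : Antitone β)
    (hβ_lim : Tendsto β atTop (nhds 0))
    (hβ_le : ∀ᶠ n : ℕ in atTop, β n ≤ 1 / (8 * Real.log (Real.log n)))
    (b : ℕ → ℕ)
    (hb_mono : ∀ m n : ℕ, 1 ≤ m → m < n → b m < b n)
    (hb_pos : ∀ n : ℕ, 1 ≤ n → 0 < b n)
    (hb_lb : ∀ n : ℕ, 1 ≤ n → (n : ℝ) ≤ b n)
    (hb_ub : ∀ n : ℕ, 1 ≤ n → (b n : ℝ) ≤ (n : ℝ) ^ (1 + β n))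
    (ϱ : ℝ → ℝ)
    (hϱ : ∀ x : ℝ,
      Tendsto (fun N : ℕ => ∏ n ∈ Finset.Icc 1 N, Real.cos (π * x / (b n : ℝ)))
        atTop (nhds (ϱ x))) :
    ∃ C' : ℝ, 0 < C' ∧ ∀ ε : ℝ, 0 < ε → ∃ N₀ : ℕ, ∀ N : ℕ, N₀ ≤ N →
      ∀ a c : ℝ, a ≤ c → Real.exp (-C' * Real.log N ^ 2) < c - a →
        |(Nat.card {s : Fin N → ({-1, 1} : Finset ℝ) //
              (∑ n : Fin N, (s n : ℝ) / (b ((n : ℕ) + 1) : ℝ)) ∈ Set.Icc a c} : ℝ)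
            / 2 ^ N -
          ∫ x in Set.Icc a c,
            (2 * ∫ u in Set.Ioi (0 : ℝ), Real.cos (2 * π * u * x) * ϱ (2 * u))| ≤
        ε * (c - a) := by
  set g : ℝ → ℝ := fun x =>
    2 * ∫ u in Set.Ioi (0 : ℝ), Real.cos (2 * π * u * x) * ϱ (2 * u) with hg
  obtain ⟨hgc, ⟨G, hG⟩, htest⟩ := exists_density_and_test_bound β hβ_lim b hb_mono hb_pos hb_ub ϱ
    hϱ g (fun x => rfl)
  have hG0 : 0 ≤ G := (abs_nonneg _).trans (hG 0)
  refine ⟨1, one_pos, fun ε hε => ?_⟩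
  -- The bumps cost `4 * η * G` per unit length; `η` makes this at most `ε / 2`.
  obtain ⟨η, hη0, hη4, hηG⟩ : ∃ η : ℝ, 0 < η ∧ η ≤ 1 / 4 ∧ 4 * η * G ≤ ε / 2 := by
    refine ⟨min (1 / 4) (ε / (8 * (G + 1))), by positivity, min_le_left _ _, ?_⟩
    have h1 : min (1 / 4) (ε / (8 * (G + 1))) ≤ ε / (8 * (G + 1)) := min_le_right _ _
    rw [le_div_iff₀ (by positivity)] at h1
    have h2 : 0 < min (1 / 4) (ε / (8 * (G + 1))) := by positivity
    nlinarith
  obtain ⟨φ, hφ, hφs, hφ0, hφ1, hφin, hφout⟩ :=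
    exists_bump (1 / 2) (1 / 2 + η) (by norm_num) (by linarith)
  obtain ⟨χ, hχ, hχs, hχ0, hχ1, hχin, hχout⟩ :=
    exists_bump (1 / 2 - η) (1 / 2) (by linarith) (by linarith)
  obtain ⟨N₀, hN₀⟩ := eventually_atTop.1
    ((htest φ hφ hφs (ε / 2) (by linarith)).and (htest χ hχ hχs (ε / 2) (by linarith)))
  refine ⟨N₀, fun N hN a c _ hL => ?_⟩
  obtain ⟨L, rfl⟩ : ∃ L, c = a + L := ⟨c - a, by ring⟩
  rw [add_sub_cancel_left] at hL ⊢
  rw [neg_one_mul] at hL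
  have hL0 : 0 < L := (Real.exp_pos _).trans hL
  have e1 := (hN₀ N hN).1 a L hL
  have e2 := (hN₀ N hN).2 a L hL
  have e3 := integral_bump_sub φ g G L η a hη0 hL0 hG hgc hφ.continuous hφs hφ0 hφ1
    (fun y hy => hφin y (by linarith)) hφout
  have e4 := integral_bump_sub χ g G L η a hη0 hL0 hG hgc hχ.continuous hχs hχ0 hχ1
    hχin (fun y hy => hχout y (by linarith))
  have e5 : 4 * η * G * L ≤ ε / 2 * L := by gcongr
  rw [card_eq_sum_indicator (fun s => ∑ n : Fin N, (s n : ℝ) / (b ((n : ℕ) + 1) : ℝ)) a L hL0]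
  have hupper : ∀ y, (Set.Icc (0 : ℝ) 1).indicator 1 y ≤ φ y := by
    intro y
    refine Set.indicator_le' (fun y hy => ?_) (fun y _ => hφ0 y) y
    rw [hφin y (abs_le.2 ⟨by linarith [hy.1], by linarith [hy.2]⟩), Pi.one_apply]
  have hlower : ∀ y, χ y ≤ (Set.Icc (0 : ℝ) 1).indicator 1 y := by
    intro y
    rw [Set.indicator_apply]
    split_ifs with hy
    · exact hχ1 y
    · refine (hχout y ?_).le
      by_contra! h
      rw [abs_lt] at h
      exact hy ⟨by linarith, by linarith⟩
  have e6 : (∑ s : Fin N → ({-1, 1} : Finset ℝ), (Set.Icc (0 : ℝ) 1).indicator (1 : ℝ → ℝ)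
      (((∑ n : Fin N, (s n : ℝ) / (b ((n : ℕ) + 1) : ℝ)) - a) / L)) / 2 ^ N ≤
      (∑ s : Fin N → ({-1, 1} : Finset ℝ),
        φ (((∑ n : Fin N, (s n : ℝ) / (b ((n : ℕ) + 1) : ℝ)) - a) / L)) / 2 ^ N := by
    gcongr
    exact hupper _
  have e7 : (∑ s : Fin N → ({-1, 1} : Finset ℝ),
      χ (((∑ n : Fin N, (s n : ℝ) / (b ((n : ℕ) + 1) : ℝ)) - a) / L)) / 2 ^ N ≤
      (∑ s : Fin N → ({-1, 1} : Finset ℝ), (Set.Icc (0 : ℝ) 1).indicator (1 : ℝ → ℝ)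
      (((∑ n : Fin N, (s n : ℝ) / (b ((n : ℕ) + 1) : ℝ)) - a) / L)) / 2 ^ N := by
    gcongr
    exact hlower _
  rw [abs_le] at e1 e2 e3 e4 ⊢
  constructor <;> linarith [e1.1, e1.2, e2.1, e2.2, e3.1, e3.2, e4.1, e4.2]
end

section
/- Fix an integer k ≥ 1 and a real A > 0, and let b_n^{(k)} denote the n-th element, in increasing order, of the set of positive integers that are products of exactly k distinct primes; set B_k(n) = b_n^{(k)}/n. Let f : ℕ → ℝ be a function with (log N)/f(N) → 0 and f(N)/(N/B_k(N)²)^{1/(2k+1)} → 0 as N → ∞. Then there exist a constant U > 1 and N₀ such that for all N ≥ N₀ and all real x ∈ [U, exp(f(N))] one has |ϱ_N(x)| < x^{−A}, where ϱ_N(x) = ∏_{n=1}^N cos(π x / b_n^{(k)}). -/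
open Filter Real

/-!
Write `‖y‖ = |y - round y|`. Since `|sin (π t)| ≥ 2 |t|` for `|t| ≤ 1/2`, one has
`|cos (π y)| ≤ exp (-2 ‖y‖²)`, so it suffices to find many `n ≤ N` with `‖x / b n‖` not small.

If `‖x / b n‖ < δ` then `b n` divides an integer within `r = δ b_N` of `x`. For `r < x` the interval
`[x - r, x + r]` has at most `2 r + 1` integers `j`, all nonzero, and each has at most
`ω(j)^k ≤ (4 log x)^k` divisors that are products of `k` distinct primes. With
`r = N / (8 (4 log x)^k)` (which is `< x` as soon as `N ≤ x`) and `4 (4 log x)^k ≤ N`, at most half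
of the `n ≤ N` are affected (`card_close_le`), so the product is at most `exp (-N δ²)` (`abs_prod_cos_le`). This beats
`x ^ (-A)` as soon as `log x` is a small multiple of `(N / B_k(N)²)^{1/(2k+1)}`
(`decay_of_log_le`).

For `N ≤ x ≤ exp (f N)` this smallness is the hypothesis on `f N`. For `U ≤ x < N` all factors with
`n > ⌊x⌋` are dropped, and the same bound is applied with `⌊x⌋` in place of `N`; now the smallness
is `log n = o((n / B_k(n)²)^{1/(2k+1)})` (`eventually_log_le`), a consequence of Chebyshev's lower
bound for the prime counting function in the weak form `b n = O(n^{5/4})`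
(`eventually_nth_isProdPrimes_le`).
-/

/-- `m` is a product of exactly `k` distinct primes. -/
def IsProdPrimes (k m : ℕ) : Prop := Squarefree m ∧ m.primeFactors.card = k

/-! ### Distance to the nearest integer -/

/-- Gaussian bound for the cosine in terms of the distance to the nearest integer, from Jordan's
inequality `|sin (π t)| ≥ 2 |t|` on `|t| ≤ 1/2` and `1 - u ≤ exp (-u)`. -/
theorem abs_cos_pi_mul_le_s13 (y : ℝ) :
    |cos (π * y)| ≤ exp (-(2 * (y - round y) ^ 2)) := by
  set t : ℝ := y - round y with ht
  have ht2 : |t| ≤ 1 / 2 := abs_sub_round y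
  have hcos : |cos (π * y)| = |cos (π * t)| := by
    have : π * t = π * y - (round y : ℤ) * π := by rw [ht]; ring
    rw [this, cos_sub_int_mul_pi, abs_mul, abs_zpow]
    simp
  have hsin : 2 * |t| ≤ |sin (π * t)| := by
    have h1 : |π * t| ≤ π / 2 := by
      rw [abs_mul, abs_of_pos pi_pos]
      nlinarith [pi_pos]
    have := mul_abs_le_abs_sin h1
    rw [abs_mul, abs_of_pos pi_pos] at this
    calc 2 * |t| = 2 / π * (π * |t|) := by field_simp
      _ ≤ _ := this
  have hsq : cos (π * t) ^ 2 ≤ exp (-(2 * t ^ 2)) ^ 2 := by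
    have h1 : 4 * t ^ 2 ≤ sin (π * t) ^ 2 := by
      rw [← sq_abs (sin _), ← sq_abs t]
      nlinarith [abs_nonneg t]
    have h2 := sin_sq_add_cos_sq (π * t)
    have h3 := add_one_le_exp (-(4 * t ^ 2))
    have h4 : exp (-(2 * t ^ 2)) ^ 2 = exp (-(4 * t ^ 2)) := by
      rw [← exp_nat_mul]; push_cast; ring_nf
    rw [h4]; linarith
  rw [hcos]
  exact abs_le_of_sq_le_sq hsq (exp_pos _).le |> fun h => by simpa using h

/-! ### Divisors that are products of `k` distinct primes -/

theorem two_pow_card_primeFactors_le {j : ℕ} (hj : j ≠ 0) : 2 ^ j.primeFactors.card ≤ j := by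
  calc 2 ^ j.primeFactors.card ≤ ∏ p ∈ j.primeFactors, p :=
        Finset.pow_card_le_prod _ _ _ fun p hp => (Nat.prime_of_mem_primeFactors hp).two_le
    _ ≤ j := Nat.le_of_dvd (Nat.pos_of_ne_zero hj) (Nat.prod_primeFactors_dvd j)

open Classical in
/-- A squarefree divisor of `j` is determined by its set of prime factors, a subset of that of `j`. -/
theorem card_divisors_isProdPrimes_le (k : ℕ) {j : ℕ} (hj : j ≠ 0) :
    (j.divisors.filter (IsProdPrimes k)).card ≤ j.primeFactors.card ^ k := by
  refine le_trans ?_ (Nat.choose_le_pow _ k)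
  rw [← Finset.card_powersetCard]
  refine Finset.card_le_card_of_injOn Nat.primeFactors ?_ ?_
  · intro d hd
    have hd : d ∈ j.divisors.filter (IsProdPrimes k) := hd
    rw [Finset.mem_filter, Nat.mem_divisors] at hd
    exact Finset.mem_coe.2 (Finset.mem_powersetCard.2 ⟨Nat.primeFactors_mono hd.1.1 hj, hd.2.2⟩)
  · intro d hd e he hde
    have hd := (Finset.mem_filter.1 (Finset.mem_coe.1 hd)).2
    have he := (Finset.mem_filter.1 (Finset.mem_coe.1 he)).2
    rw [← Nat.prod_primeFactors_of_squarefree hd.1, ← Nat.prod_primeFactors_of_squarefree he.1]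
    rw [hde]

/-! ### Growth of the sequence -/

/-- Multiplying by a suitable fixed `Q`, a product of `k - 1` distinct primes, sends all but
finitely many primes to products of `k` distinct primes. -/
theorem exists_mul_prime_isProdPrimes {k : ℕ} (hk : 1 ≤ k) :
    ∃ Q : ℕ, Q ≠ 0 ∧ ∀ p : ℕ, p.Prime → ¬ p ∣ Q → IsProdPrimes k (Q * p) := by
  obtain ⟨s, hs, hcard⟩ := Nat.infinite_setOfPred_prime.exists_subset_card_eq (k - 1)
  have hpf : (∏ p ∈ s, p).primeFactors = s := Nat.primeFactors_prod fun p hp => hs hp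
  have hQ : (∏ p ∈ s, p) ≠ 0 := Finset.prod_ne_zero_iff.2 fun p hp => (hs hp : p.Prime).ne_zero
  have hsq : Squarefree (∏ p ∈ s, p) := by
    refine Finset.squarefree_prod_of_pairwise_isCoprime (fun p hp q hq hpq => ?_)
      fun p hp => (hs hp : p.Prime).squarefree
    exact Nat.coprime_iff_isRelPrime.1 ((Nat.coprime_primes (hs hp) (hs hq)).2 hpq)
  refine ⟨∏ p ∈ s, p, hQ, fun p hp hpQ => ⟨?_, ?_⟩⟩
  · rw [Nat.squarefree_mul ((Nat.coprime_comm.1 (hp.coprime_iff_not_dvd.2 hpQ)))]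
    exact ⟨hsq, hp.squarefree⟩
  · rw [Nat.primeFactors_mul hQ hp.ne_zero, hpf, hp.primeFactors, Finset.card_union_of_disjoint,
      hcard, Finset.card_singleton]
    · omega
    · rw [Finset.disjoint_singleton_right, ← hpf, Nat.mem_primeFactors]
      exact fun h => hpQ h.2.1

theorem infinite_isProdPrimes {k : ℕ} (hk : 1 ≤ k) : (Set.ofPred (IsProdPrimes k)).Infinite := by
  obtain ⟨Q, hQ, h⟩ := exists_mul_prime_isProdPrimes hk
  refine Set.infinite_of_forall_exists_gt fun a => ?_
  obtain ⟨p, hp, hpp⟩ := Nat.exists_infinite_primes (a + Q + 1)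
  refine ⟨Q * p, h p hpp fun hd => ?_, ?_⟩
  · have := Nat.le_of_dvd (Nat.pos_of_ne_zero hQ) hd
    omega
  · nlinarith [Nat.pos_of_ne_zero hQ]

open Classical in
theorem primeCounting_le_add_count {k Q : ℕ} (hQ : Q ≠ 0)
    (h : ∀ p : ℕ, p.Prime → ¬ p ∣ Q → IsProdPrimes k (Q * p)) (m : ℕ) :
    Nat.primeCounting m ≤ Q.primeFactors.card + Nat.count (IsProdPrimes k) (Q * m + 1) := by
  rw [← Nat.primesLE_card_eq_primeCounting, Nat.count_eq_card_filter_range]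
  have h1 : (Nat.primesLE m).card ≤ Q.primeFactors.card + (Nat.primesLE m \ Q.primeFactors).card := by
    have := Finset.le_card_sdiff Q.primeFactors (Nat.primesLE m)
    omega
  refine h1.trans (Nat.add_le_add_left ?_ _)
  refine Finset.card_le_card_of_injOn (fun p => Q * p) ?_ ?_
  · intro p hp
    have hp := Finset.mem_coe.1 hp
    simp only [Finset.mem_sdiff, Nat.mem_primesLE, Nat.mem_primeFactors] at hp
    refine Finset.mem_coe.2 (Finset.mem_filter.2 ⟨?_, h p hp.1.2 fun hd => hp.2 ⟨hp.1.2, hd, hQ⟩⟩)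
    exact Finset.mem_range.2 (Nat.lt_succ_of_le (Nat.mul_le_mul_left _ hp.1.1))
  · intro p _ q _ hpq
    exact Nat.eq_of_mul_eq_mul_left (Nat.pos_of_ne_zero hQ) hpq

/-- A weak power-saving form of Chebyshev's bound `π(m) ≫ m / log m`. -/
theorem eventually_rpow_le_primeCounting :
    ∀ᶠ m : ℕ in atTop, (m : ℝ) ^ (9 / 10 : ℝ) / 2 ≤ Nat.primeCounting m := by
  have h1 : ∀ᶠ m : ℕ in atTop, log (m : ℝ) ≤ (m : ℝ) ^ (1 / 10 : ℝ) := by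
    have := (isLittleO_log_rpow_atTop (r := 1 / 10) (by norm_num)).bound one_pos
    filter_upwards [tendsto_natCast_atTop_atTop.eventually this, eventually_ge_atTop 1] with m hm h1
    have h1 : (1 : ℝ) ≤ m := by exact_mod_cast h1
    rw [norm_of_nonneg (log_nonneg h1), norm_of_nonneg (by positivity), one_mul] at hm
    exact hm
  have h2 : ∀ᶠ m : ℕ in atTop, log ((m : ℝ) + 1) ≤ 1 / 20 * ((m : ℝ) + 1) := by
    have := isLittleO_log_id_atTop.bound (show (0 : ℝ) < 1 / 20 by norm_num)
    have ht : Tendsto (fun m : ℕ => (m : ℝ) + 1) atTop atTop :=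
      tendsto_atTop_add_const_right _ _ tendsto_natCast_atTop_atTop
    filter_upwards [ht.eventually this] with m hm
    have h0 : (0 : ℝ) ≤ m := Nat.cast_nonneg m
    simp only [id] at hm
    rw [norm_of_nonneg (log_nonneg (by linarith)), norm_of_nonneg (by linarith)] at hm
    exact hm
  filter_upwards [h1, h2, eventually_ge_atTop 2] with m h1 h2 h3
  have h3 : (2 : ℝ) ≤ m := by exact_mod_cast h3
  refine le_trans ?_ (Chebyshev.pi_ge m)
  rw [le_div_iff₀ (log_pos (by linarith))]
  have hm : (m : ℝ) ^ (9 / 10 : ℝ) * (m : ℝ) ^ (1 / 10 : ℝ) = m := by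
    rw [← rpow_add (by linarith)]; norm_num
  have hp : 0 < (m : ℝ) ^ (9 / 10 : ℝ) := by positivity
  nlinarith [log_two_gt_d9]

/-- The `n`-th product of `k` distinct primes is `O(n^{5/4})`: with `Q` a fixed product of `k - 1`
primes, the numbers `Q * p` for primes `p ≤ ⌈n^{5/4}⌉` are already numerous enough. -/
theorem eventually_nth_isProdPrimes_le {k : ℕ} (hk : 1 ≤ k) :
    ∃ C : ℝ, 0 < C ∧ ∀ᶠ n : ℕ in atTop,
      (Nat.nth (IsProdPrimes k) (n - 1) : ℝ) ≤ C * (n : ℝ) ^ (5 / 4 : ℝ) := by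
  classical
  obtain ⟨Q, hQ, h⟩ := exists_mul_prime_isProdPrimes hk
  refine ⟨2 * Q, by positivity, ?_⟩
  have hceil : Tendsto (fun n : ℕ => ⌈(n : ℝ) ^ (5 / 4 : ℝ)⌉₊) atTop atTop :=
    tendsto_nat_ceil_atTop.comp
      ((tendsto_rpow_atTop (by norm_num)).comp tendsto_natCast_atTop_atTop)
  have hbig : ∀ᶠ n : ℕ in atTop, 4 ≤ (n : ℝ) ^ (1 / 8 : ℝ) :=
    ((tendsto_rpow_atTop (by norm_num)).comp tendsto_natCast_atTop_atTop).eventually_ge_atTop 4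
  filter_upwards [hceil.eventually eventually_rpow_le_primeCounting, hbig,
    eventually_ge_atTop (Q.primeFactors.card + 1)] with n h1 h2 h3
  set m := ⌈(n : ℝ) ^ (5 / 4 : ℝ)⌉₊ with hm
  have hn1 : (1 : ℝ) ≤ n := by exact_mod_cast (by omega : 1 ≤ n)
  have hnm : (n : ℝ) ^ (5 / 4 : ℝ) ≤ m := Nat.le_ceil _
  have h4 : (2 * n : ℝ) ≤ Nat.primeCounting m := by
    refine le_trans ?_ h1
    have : ((n : ℝ) ^ (5 / 4 : ℝ)) ^ (9 / 10 : ℝ) ≤ (m : ℝ) ^ (9 / 10 : ℝ) := by gcongr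
    rw [← rpow_mul (by linarith)] at this
    have e : (n : ℝ) ^ (5 / 4 * (9 / 10) : ℝ) = n * (n : ℝ) ^ (1 / 8 : ℝ) := by
      nth_rewrite 2 [← rpow_one (n : ℝ)]
      rw [← rpow_add (by linarith)]; norm_num
    rw [e] at this
    nlinarith
  have h4 : 2 * n ≤ Nat.primeCounting m := by exact_mod_cast h4
  have h5 := primeCounting_le_add_count hQ h m
  have h6 : Nat.nth (IsProdPrimes k) (n - 1) < Q * m + 1 := Nat.nth_lt_of_lt_count (by omega)
  have h7 : (Nat.nth (IsProdPrimes k) (n - 1) : ℝ) ≤ Q * m := by exact_mod_cast Nat.lt_succ_iff.1 h6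
  have h8 : (m : ℝ) ≤ 2 * (n : ℝ) ^ (5 / 4 : ℝ) := by
    have := (Nat.ceil_lt_add_one (show 0 ≤ (n : ℝ) ^ (5 / 4 : ℝ) by positivity)).le
    have := one_le_rpow hn1 (show (0 : ℝ) ≤ 5 / 4 by norm_num)
    linarith
  calc _ ≤ (Q : ℝ) * m := h7
    _ ≤ Q * (2 * (n : ℝ) ^ (5 / 4 : ℝ)) := by gcongr
    _ = _ := by ring

/-! ### Indices with `x / b n` close to an integer -/

theorem card_Icc_ceil_floor_le {u v : ℝ} (hu : 0 ≤ u) (huv : u ≤ v) :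
    ((Finset.Icc ⌈u⌉₊ ⌊v⌋₊).card : ℝ) ≤ v - u + 1 := by
  rw [Nat.card_Icc]
  rcases le_total ⌈u⌉₊ (⌊v⌋₊ + 1) with h | h
  · rw [Nat.cast_sub h]
    push_cast
    linarith [Nat.le_ceil u, Nat.floor_le (hu.trans huv)]
  · rw [Nat.sub_eq_zero_of_le h]
    push_cast
    linarith

theorem card_primeFactors_le_log_s13 {j : ℕ} (hj : j ≠ 0) {x : ℝ} (hx : 2 ≤ x) (hjx : (j : ℝ) ≤ 2 * x) :
    (j.primeFactors.card : ℝ) ≤ 4 * log x := by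
  have h1 : (2 : ℝ) ^ j.primeFactors.card ≤ 2 * x :=
    le_trans (by exact_mod_cast two_pow_card_primeFactors_le hj) hjx
  have h2 := log_le_log (by positivity) h1
  rw [log_pow, log_mul (by norm_num) (by linarith)] at h2
  have h3 : log 2 ≤ log x := log_le_log (by norm_num) hx
  have h4 := log_two_gt_d9
  have h5 : (0 : ℝ) ≤ j.primeFactors.card := Nat.cast_nonneg _
  nlinarith

open Classical in
/-- Few `n` have `x / b n` close to an integer: such a `b n` divides one of the at most `2 r + 1`
integers in `[x - r, x + r]`, and none of these is zero because `r < x`. -/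
theorem card_close_le {k N : ℕ} {b : ℕ → ℕ} {M x δ r : ℝ}
    (hP : ∀ n ∈ Finset.Icc 1 N, IsProdPrimes k (b n))
    (hinj : Set.InjOn b (Finset.Icc 1 N : Finset ℕ))
    (hM : ∀ n ∈ Finset.Icc 1 N, (b n : ℝ) ≤ M)
    (hx : 2 ≤ x) (hδ : 0 < δ) (hr : δ * M ≤ r) (hr0 : 0 ≤ r) (hrx : r < x) :
    (((Finset.Icc 1 N).filter
      fun n => |x / b n - round (x / (b n : ℝ))| < δ).card : ℝ) ≤
      (2 * r + 1) * (4 * log x) ^ k := by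
  set J : Finset ℕ := (Finset.Icc ⌈x - r⌉₊ ⌊x + r⌋₊) with hJ
  have hJmem : ∀ j ∈ J, j ≠ 0 ∧ (j : ℝ) ≤ 2 * x := by
    intro j hj
    rw [hJ, Finset.mem_Icc, Nat.ceil_le, Nat.le_floor_iff (by linarith)] at hj
    refine ⟨?_, by linarith⟩
    rintro rfl
    push_cast at hj
    linarith
  have hsub : ((Finset.Icc 1 N).filter
      fun n => |x / b n - round (x / (b n : ℝ))| < δ).card ≤
      (J.biUnion fun j => j.divisors.filter (IsProdPrimes k)).card := by
    refine Finset.card_le_card_of_injOn b ?_ (hinj.mono ?_)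
    · intro n hn
      obtain ⟨hn, hclose⟩ := Finset.mem_filter.1 (Finset.mem_coe.1 hn)
      have hb0 : 0 < b n := Nat.pos_of_ne_zero (hP n hn).1.ne_zero
      have hb : (0 : ℝ) < b n := by exact_mod_cast hb0
      have hdist : |x - round (x / (b n : ℝ)) * b n| < r := by
        have e : x - round (x / (b n : ℝ)) * b n = (x / b n - round (x / (b n : ℝ))) * b n := by
          field_simp
        rw [e, abs_mul, abs_of_pos hb]
        calc _ < δ * b n := by gcongr
          _ ≤ δ * M := by gcongr; exact hM n hn
          _ ≤ r := hr
      rw [abs_lt] at hdist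
      have hmpos : 0 < round (x / (b n : ℝ)) := by
        have : (0 : ℝ) < round (x / (b n : ℝ)) := by
          by_contra! h
          nlinarith
        exact_mod_cast this
      obtain ⟨m, hm⟩ := Int.eq_ofNat_of_zero_le hmpos.le
      rw [hm] at hdist
      push_cast at hdist
      have hj : m * b n ∈ J := by
        rw [hJ, Finset.mem_Icc, Nat.ceil_le, Nat.le_floor_iff (by linarith)]
        push_cast
        constructor <;> linarith
      refine Finset.mem_coe.2 (Finset.mem_biUnion.2 ⟨m * b n, hj, ?_⟩)
      rw [Finset.mem_filter, Nat.mem_divisors]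
      exact ⟨⟨Dvd.intro_left m rfl, (hJmem _ hj).1⟩, hP n hn⟩
    · exact fun n hn => Finset.mem_coe.2 (Finset.mem_filter.1 (Finset.mem_coe.1 hn)).1
  have hcard : (J.card : ℝ) ≤ 2 * r + 1 := by
    have := card_Icc_ceil_floor_le (show 0 ≤ x - r by linarith) (show x - r ≤ x + r by linarith)
    linarith
  have hlog : 0 ≤ log x := log_nonneg (by linarith)
  calc _ ≤ ((J.biUnion fun j => j.divisors.filter (IsProdPrimes k)).card : ℝ) := by
        exact_mod_cast hsub
    _ ≤ ((∑ j ∈ J, (j.divisors.filter (IsProdPrimes k)).card : ℕ) : ℝ) := by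
        exact_mod_cast Finset.card_biUnion_le
    _ = ∑ j ∈ J, ((j.divisors.filter (IsProdPrimes k)).card : ℝ) := by push_cast; rfl
    _ ≤ ∑ j ∈ J, (4 * log x) ^ k := by
        refine Finset.sum_le_sum fun j hj => ?_
        obtain ⟨hj0, hjx⟩ := hJmem j hj
        refine le_trans (b := ((j.primeFactors.card : ℝ)) ^ k) ?_ ?_
        · exact_mod_cast card_divisors_isProdPrimes_le k hj0
        · gcongr
          exact card_primeFactors_le_log_s13 hj0 hx hjx
    _ = J.card * (4 * log x) ^ k := by rw [Finset.sum_const, nsmul_eq_mul]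
    _ ≤ _ := by gcongr

/-- At least half of the indices `n ≤ N` satisfy `|x / b n - round (x / b n)| ≥ δ` with
`δ = N / (8 (4 log x)^k M)`, and each of them contributes a factor at most `exp (-2 δ²)`. -/
theorem abs_prod_cos_le_s13 {k N : ℕ} {b : ℕ → ℕ} {M x : ℝ} (hN : 1 ≤ N)
    (hP : ∀ n ∈ Finset.Icc 1 N, IsProdPrimes k (b n))
    (hinj : Set.InjOn b (Finset.Icc 1 N : Finset ℕ))
    (hM : ∀ n ∈ Finset.Icc 1 N, (b n : ℝ) ≤ M) (hM0 : 0 < M)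
    (hx : 2 ≤ x) (hNx : N ≤ x) (hL : 4 * (4 * log x) ^ k ≤ N) :
    |∏ n ∈ Finset.Icc 1 N, cos (π * x / (b n : ℝ))| ≤
      exp (-(N * (N / (8 * (4 * log x) ^ k * M)) ^ 2)) := by
  classical
  set W : ℝ := (4 * log x) ^ k with hW
  have hW1 : 1 ≤ W := by
    refine one_le_pow₀ ?_
    have := log_le_log (by norm_num) hx
    linarith [log_two_gt_d9]
  have hN1 : (1 : ℝ) ≤ N := by exact_mod_cast hN
  set δ : ℝ := N / (8 * W * M) with hδ
  have hδ0 : 0 < δ := by positivity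
  have hr : δ * M = N / (8 * W) := by rw [hδ]; field_simp
  have hrN : N / (8 * W) ≤ N / 8 := by
    gcongr
    linarith
  set S := (Finset.Icc 1 N).filter fun n => |x / b n - round (x / (b n : ℝ))| < δ with hS
  have hclose : (S.card : ℝ) ≤ N / 2 := by
    refine (card_close_le hP hinj hM hx hδ0 hr.le (by positivity) (by linarith)).trans ?_
    have e : (2 * (N / (8 * W)) + 1) * W = N / 4 + W := by field_simp; ring
    rw [← hW, e]
    linarith
  have hsplit : (S.card : ℝ) +
      (((Finset.Icc 1 N).filter fun n => ¬ |x / b n - round (x / (b n : ℝ))| < δ).card : ℝ) = N := by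
    have := Finset.card_filter_add_card_filter_not (s := Finset.Icc 1 N)
      (fun n => |x / b n - round (x / (b n : ℝ))| < δ)
    rw [Nat.card_Icc, Nat.add_sub_cancel] at this
    exact_mod_cast this
  set T := (Finset.Icc 1 N).filter fun n => ¬ |x / b n - round (x / (b n : ℝ))| < δ with hT
  rw [Finset.abs_prod]
  calc ∏ n ∈ Finset.Icc 1 N, |cos (π * x / (b n : ℝ))|
      ≤ ∏ n ∈ T, |cos (π * x / (b n : ℝ))| :=
        Finset.prod_le_prod_of_subset_of_le_one (Finset.filter_subset _ _)
          (fun _ _ => abs_nonneg _) (fun _ _ _ => abs_cos_le_one _)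
    _ ≤ ∏ n ∈ T, exp (-(2 * δ ^ 2)) := by
        refine Finset.prod_le_prod (fun _ _ => abs_nonneg _) fun n hn => ?_
        have hn := not_lt.1 (Finset.mem_filter.1 hn).2
        rw [mul_div_assoc]
        refine (abs_cos_pi_mul_le_s13 _).trans (exp_le_exp.2 ?_)
        rw [← sq_abs (x / b n - _)]
        have : δ ^ 2 ≤ |x / b n - round (x / (b n : ℝ))| ^ 2 := by gcongr
        linarith
    _ = exp (-(2 * T.card * δ ^ 2)) := by
        rw [Finset.prod_const, ← exp_nat_mul]
        ring_nf
    _ ≤ _ := by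
        refine exp_le_exp.2 (neg_le_neg ?_)
        gcongr
        linarith

/-! ### Decay of the product -/

theorem le_of_strictMono_shift {g : ℕ → ℕ} (hg : StrictMono g) (h0 : 1 ≤ g 0) (n : ℕ) :
    n + 1 ≤ g n := by
  induction n with
  | zero => simpa using h0
  | succ n ih => exact Nat.succ_le_of_lt (ih.trans_lt (hg n.lt_succ_self))

/-- The decay bound at a single pair `(N, x)`, once `log x` is a small enough multiple of
`(N / B_k(N)²)^{1/(2k+1)}`, where `B_k(N) = b N / N`. -/
theorem decay_of_log_le {k N : ℕ} (hk : 1 ≤ k) {A : ℝ} (hA : 0 < A) {b : ℕ → ℕ}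
    (hb : ∀ n : ℕ, 1 ≤ n → b n = Nat.nth (IsProdPrimes k) (n - 1)) (hN : 1 ≤ N)
    {x : ℝ} (hx : 2 ≤ x) (hNx : N ≤ x)
    (hlog : log x ≤ (1 / ((16 * A + 4) * 4)) *
      ((N : ℝ) / ((b N : ℝ) / N) ^ 2) ^ ((1 : ℝ) / (2 * (k : ℝ) + 1))) :
    |∏ n ∈ Finset.Icc 1 N, cos (π * x / (b n : ℝ))| < x ^ (-A) := by
  have hinf := infinite_isProdPrimes hk
  have hmono := Nat.nth_strictMono hinf
  have hmem : ∀ n ∈ Finset.Icc 1 N, IsProdPrimes k (b n) := fun n hn => by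
    rw [hb n (Finset.mem_Icc.1 hn).1]; exact Nat.nth_mem_of_infinite hinf _
  have hge : N ≤ b N := by
    have := le_of_strictMono_shift hmono
      (Nat.pos_of_ne_zero (Nat.nth_mem_of_infinite hinf 0).1.ne_zero) (N - 1)
    rw [hb N hN]; omega
  have hN1 : (1 : ℝ) ≤ N := by exact_mod_cast hN
  have hgeR : (N : ℝ) ≤ b N := by exact_mod_cast hge
  have hM0 : (0 : ℝ) < b N := by linarith
  have hB1 : 1 ≤ (b N : ℝ) / N := by rw [le_div_iff₀ (by linarith)]; linarith
  set h : ℝ := (N : ℝ) / ((b N : ℝ) / N) ^ 2 with hh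
  have hh0 : 0 ≤ h := by positivity
  have hhN : h ≤ N := div_le_self (by linarith) (one_le_pow₀ hB1)
  set L : ℝ := 4 * log x with hLdef
  have hL1 : 1 ≤ L := by
    have := log_le_log (by norm_num) hx
    linarith [log_two_gt_d9]
  have hkey : (16 * A + 4) * L ^ (2 * k + 1) ≤ h := by
    have h1 : (16 * A + 4) * L ≤ h ^ ((1 : ℝ) / (2 * (k : ℝ) + 1)) := by
      have : (16 * A + 4) * 4 * log x ≤ h ^ ((1 : ℝ) / (2 * (k : ℝ) + 1)) := by
        rw [one_div_mul_eq_div, le_div_iff₀ (by positivity)] at hlog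
        linarith
      rw [hLdef]; linarith
    have h2 : ((16 * A + 4) * L) ^ (2 * k + 1) ≤ h := by
      refine (pow_le_pow_left₀ (by positivity) h1 _).trans_eq ?_
      rw [← rpow_natCast, ← rpow_mul hh0]
      push_cast
      rw [one_div_mul_cancel (by positivity), rpow_one]
    refine le_trans ?_ h2
    rw [mul_pow (16 * A + 4) L]
    exact mul_le_mul_of_nonneg_right
      (le_self_pow₀ (show 1 ≤ 16 * A + 4 by linarith) (by omega : 2 * k + 1 ≠ 0)) (by positivity)
  have hsmall : 4 * L ^ k ≤ N := by
    have : L ^ k ≤ L ^ (2 * k + 1) := pow_le_pow_right₀ hL1 (by omega)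
    have h0 : 0 ≤ A * L ^ (2 * k + 1) := by positivity
    linarith
  refine (abs_prod_cos_le_s13 (M := b N) hN hmem ?_ ?_ hM0 hx hNx hsmall).trans_lt ?_
  · intro n hn m hm hnm
    have hn := (Finset.mem_Icc.1 (Finset.mem_coe.1 hn)).1
    have hm := (Finset.mem_Icc.1 (Finset.mem_coe.1 hm)).1
    rw [hb n hn, hb m hm] at hnm
    have := hmono.injective hnm
    omega
  · intro n hn
    obtain ⟨hn, hnN⟩ := Finset.mem_Icc.1 hn
    rw [hb n hn, hb N hN]
    exact_mod_cast hmono.monotone (by omega : n - 1 ≤ N - 1)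
  · rw [rpow_def_of_pos (by linarith)]
    refine exp_lt_exp.2 ?_
    have e : (N : ℝ) * (N / (8 * L ^ k * b N)) ^ 2 = h / (64 * L ^ (2 * k)) := by
      rw [hh, mul_comm 2 k, pow_mul]
      field_simp
      norm_num
    rw [← hLdef, e]
    have h3 : A * log x < h / (64 * L ^ (2 * k)) := by
      rw [lt_div_iff₀ (by positivity)]
      have : 0 < L ^ (2 * k + 1) := by positivity
      have e2 : A * log x * (64 * L ^ (2 * k)) = 16 * A * L ^ (2 * k + 1) := by
        rw [pow_succ, hLdef]; ring
      rw [e2]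
      linarith
    linarith

/-- `log n = o((n / B_k(n)²)^{1/(2k+1)})`, since `b n = O(n^{5/4})` gives `n / B_k(n)² ≫ n^{1/2}`. -/
theorem eventually_log_le {k : ℕ} (hk : 1 ≤ k) {b : ℕ → ℕ}
    (hb : ∀ n : ℕ, 1 ≤ n → b n = Nat.nth (IsProdPrimes k) (n - 1)) {ε : ℝ} (hε : 0 < ε) :
    ∀ᶠ n : ℕ in atTop,
      2 * log n ≤ ε * ((n : ℝ) / ((b n : ℝ) / n) ^ 2) ^ ((1 : ℝ) / (2 * (k : ℝ) + 1)) := by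
  obtain ⟨C, hC, hev⟩ := eventually_nth_isProdPrimes_le hk
  set s : ℝ := (1 : ℝ) / (2 * (k : ℝ) + 1) with hs
  have hs0 : 0 < s := by positivity
  set c : ℝ := ε * (1 / C ^ 2) ^ s / 2 with hc
  have hc0 : 0 < c := by positivity
  have hlog := tendsto_natCast_atTop_atTop.eventually
    ((isLittleO_log_rpow_atTop (r := 1 / 2 * s) (by positivity)).bound hc0)
  filter_upwards [hev, hlog, eventually_ge_atTop 1] with n h1 h2 h3
  have hn1 : (1 : ℝ) ≤ n := by exact_mod_cast h3
  have hn0 : (0 : ℝ) < n := by linarith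
  rw [norm_of_nonneg (log_nonneg hn1), norm_of_nonneg (by positivity)] at h2
  rw [← hb n h3] at h1
  have hbpos : (0 : ℝ) < b n := by
    have := (Nat.nth_mem_of_infinite (infinite_isProdPrimes hk) (n - 1)).1.ne_zero
    rw [← hb n h3] at this
    exact_mod_cast Nat.pos_of_ne_zero this
  have h4 : (b n : ℝ) / n ≤ C * (n : ℝ) ^ (1 / 4 : ℝ) := by
    rw [div_le_iff₀ hn0]
    refine h1.trans_eq ?_
    rw [mul_assoc, ← rpow_add_one hn0.ne']
    norm_num
  have h5 : 1 / C ^ 2 * (n : ℝ) ^ (1 / 2 : ℝ) ≤ (n : ℝ) / ((b n : ℝ) / n) ^ 2 := by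
    rw [le_div_iff₀ (by positivity)]
    have h6 : ((b n : ℝ) / n) ^ 2 ≤ (C * (n : ℝ) ^ (1 / 4 : ℝ)) ^ 2 := by gcongr
    have h7 : ((n : ℝ) ^ (1 / 4 : ℝ)) ^ 2 = (n : ℝ) ^ (1 / 2 : ℝ) := by
      rw [← rpow_natCast, ← rpow_mul hn0.le]; norm_num
    have h8 : (n : ℝ) ^ (1 / 2 : ℝ) * (n : ℝ) ^ (1 / 2 : ℝ) = n := by
      rw [← rpow_add hn0]; norm_num
    rw [mul_pow, h7] at h6
    calc _ ≤ 1 / C ^ 2 * (n : ℝ) ^ (1 / 2 : ℝ) * (C ^ 2 * (n : ℝ) ^ (1 / 2 : ℝ)) := by gcongr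
      _ = (n : ℝ) ^ (1 / 2 : ℝ) * (n : ℝ) ^ (1 / 2 : ℝ) := by field_simp
      _ = n := h8
  have h9 := rpow_le_rpow (by positivity) h5 hs0.le
  rw [mul_rpow (by positivity) (by positivity), ← rpow_mul hn0.le] at h9
  calc 2 * log n ≤ 2 * (c * (n : ℝ) ^ (1 / 2 * s)) := by gcongr
    _ = ε * ((1 / C ^ 2) ^ s * (n : ℝ) ^ (1 / 2 * s)) := by rw [hc]; ring
    _ ≤ _ := by gcongr

/-- **Proposition (decay of `ϱ_N` for products of `k` distinct primes).**
Fix `k ≥ 1` and `A > 0`. Let `b n` be the `n`-th element (in increasing order,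
`n ≥ 1`) of the set of positive integers that are products of exactly `k`
distinct primes, and `B_k(n) = b n / n`. Let `f : ℕ → ℝ` satisfy
`(log N)/f(N) → 0` and `f(N)/(N/B_k(N)²)^{1/(2k+1)} → 0`. Then there are `U > 1`
and `N₀` such that for all `N ≥ N₀` and all `x ∈ [U, exp (f N)]` one has
`|ϱ_N(x)| < x^{−A}`, where `ϱ_N(x) = ∏_{n=1}^N cos (π x / b n)`. -/
theorem rho_N_decay_k_primes
    (k : ℕ) (hk : 1 ≤ k) (A : ℝ) (hA : 0 < A)
    (b : ℕ → ℕ)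
    (hb : ∀ n : ℕ, 1 ≤ n →
      b n = Nat.nth (fun m => Squarefree m ∧ m.primeFactors.card = k) (n - 1))
    (Bk : ℕ → ℝ) (hBk : ∀ n : ℕ, 1 ≤ n → Bk n = (b n : ℝ) / n)
    (f : ℕ → ℝ)
    (hf1 : Tendsto (fun N : ℕ => Real.log N / f N) atTop (nhds 0))
    (hf2 : Tendsto
      (fun N : ℕ => f N / (((N : ℝ) / Bk N ^ 2) ^ ((1 : ℝ) / (2 * (k : ℝ) + 1))))
      atTop (nhds 0)) :
    ∃ U : ℝ, 1 < U ∧ ∃ N₀ : ℕ, ∀ N : ℕ, N₀ ≤ N →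
      ∀ x ∈ Set.Icc U (Real.exp (f N)),
        |∏ n ∈ Finset.Icc 1 N, Real.cos (π * x / (b n : ℝ))| < x ^ (-A) := by
  have hb' : ∀ n : ℕ, 1 ≤ n → b n = Nat.nth (IsProdPrimes k) (n - 1) := hb
  set ε : ℝ := 1 / ((16 * A + 4) * 4) with hε
  have hε0 : 0 < ε := by positivity
  obtain ⟨n₀, hn₀⟩ := eventually_atTop.1 (eventually_log_le hk hb' hε0)
  obtain ⟨N₁, hN₁⟩ := eventually_atTop.1 (hf2.eventually_lt_const hε0)
  refine ⟨n₀ + 2, by linarith [(Nat.cast_nonneg n₀ : (0 : ℝ) ≤ n₀)], N₁ + 1, fun N hN x hx => ?_⟩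
  obtain ⟨hUx, hxf⟩ := hx
  have hx2 : 2 ≤ x := by linarith [(Nat.cast_nonneg n₀ : (0 : ℝ) ≤ n₀)]
  rcases le_total (N : ℝ) x with hNx | hxN
  · refine decay_of_log_le hk hA hb' (by omega) hx2 hNx ?_
    have hlf : log x ≤ f N := (log_le_iff_le_exp (by linarith)).2 hxf
    have h1 := hN₁ N (by omega)
    rw [hBk N (by omega)] at h1
    have hbpos : (0 : ℝ) < b N := by
      have := (Nat.nth_mem_of_infinite (infinite_isProdPrimes hk) (N - 1)).1.ne_zero
      rw [← hb' N (by omega)] at this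
      exact_mod_cast Nat.pos_of_ne_zero this
    have hNpos : (0 : ℝ) < N := by exact_mod_cast (by omega : 0 < N)
    rw [div_lt_iff₀ (by positivity)] at h1
    exact hlf.trans h1.le
  -- If `x ≤ N`, truncate the product at `n = ⌊x⌋₊`.
  · set n := ⌊x⌋₊ with hn
    have hnx : (n : ℝ) ≤ x := Nat.floor_le (by linarith)
    have hn2 : n₀ + 2 ≤ n := Nat.le_floor (by push_cast; exact hUx)
    have hn2R : (2 : ℝ) ≤ n := by exact_mod_cast (by omega : 2 ≤ n)
    have hnN : n ≤ N := by exact_mod_cast hnx.trans hxN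
    have hlogx : log x ≤ 2 * log n := by
      have h1 : x ≤ (n : ℝ) ^ 2 := by nlinarith [Nat.lt_floor_add_one x]
      have := log_le_log (by linarith) h1
      rw [log_pow] at this
      exact_mod_cast this
    refine lt_of_le_of_lt ?_ (decay_of_log_le hk hA hb' (by omega) hx2 hnx
      (hlogx.trans (hn₀ n (by omega))))
    rw [Finset.abs_prod, Finset.abs_prod]
    exact Finset.prod_le_prod_of_subset_of_le_one (Finset.Icc_subset_Icc_right hnN)
      (fun _ _ => abs_nonneg _) (fun _ _ _ => abs_cos_le_one _)
end
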